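/- arXiv:1008.0144 — 5 statements merged into one kernel-verified Lean document; each statement's English description precedes it below -/
import Mathlib

section
/- For every ν > −1, every t > 0 with 0 < s < t, and all x > 0, v > 0, the following 'negative-time' extension of the Chapman–Kolmogorov equation holds: ∫₀^∞ q^{(ν)}_t(v,y) · p^{(ν)}(t−s, y | x) dy = q^{(ν)}_s(v,x). -/
open MeasureTheory Real

/-- The Bessel function of the first kind `J_ν(z)`. -/
noncomputable def besselJ (ν z : ℝ) : ℝ :=
  ∑' n : ℕ, ((-1 : ℝ) ^ n / (Real.Gamma ((n : ℝ) + 1) * Real.Gamma ((n : ℝ) + 1 + ν))) *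
    (z / 2) ^ (2 * (n : ℝ) + ν)

/-- The modified Bessel function of the first kind `I_ν(z)`. -/
noncomputable def besselI (ν z : ℝ) : ℝ :=
  ∑' n : ℕ, ((1 : ℝ) / (Real.Gamma ((n : ℝ) + 1) * Real.Gamma ((n : ℝ) + 1 + ν))) *
    (z / 2) ^ (2 * (n : ℝ) + ν)

/-- The BESQ^{(ν)} transition probability density `p^{(ν)}(t, y | x)`. -/
noncomputable def besqP (ν t y x : ℝ) : ℝ :=
  (1 / (2 * t)) * (y / x) ^ (ν / 2) * Real.exp (-(x + y) / (2 * t)) *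
    besselI ν (Real.sqrt (x * y) / t)

/-- The kernel `q^{(ν)}_t(v, y)`, real form of `p^{(ν)}(−t, −v | y)`. -/
noncomputable def besqQ (ν t v y : ℝ) : ℝ :=
  (1 / (2 * t)) * (v / y) ^ (ν / 2) * Real.exp ((y - v) / (2 * t)) *
    besselJ ν (Real.sqrt (v * y) / t)

noncomputable def bphi (ν z : ℝ) : ℝ :=
  ∑' n : ℕ, z ^ n / (Real.Gamma ((n : ℝ) + 1) * Real.Gamma ((n : ℝ) + 1 + ν))

lemma besselJ_eq (ν z : ℝ) (hz : 0 < z) : besselJ ν z = (z / 2) ^ ν * bphi ν (-(z / 2) ^ 2) := by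
  unfold besselJ bphi
  rw [← tsum_mul_left]
  congr 1; ext n
  rw [Real.rpow_add (by positivity), Real.rpow_mul (by positivity), Real.rpow_natCast,
    Real.rpow_two, neg_pow ((z / 2) ^ 2)]
  ring

lemma besselI_eq (ν z : ℝ) (hz : 0 < z) : besselI ν z = (z / 2) ^ ν * bphi ν ((z / 2) ^ 2) := by
  unfold besselI bphi
  rw [← tsum_mul_left]
  congr 1; ext n
  rw [Real.rpow_add (by positivity), Real.rpow_mul (by positivity), Real.rpow_natCast,
    Real.rpow_two]
  ring

lemma pow_aux (ν t v y : ℝ) (ht : 0 < t) (hv : 0 < v) (hy : 0 < y) :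
    (v / y) ^ (ν / 2) * (Real.sqrt (v * y) / t / 2) ^ ν = (v / (2 * t)) ^ ν := by
  have h1 : ∀ w : ℝ, 0 < w → w ^ ν = (w ^ 2) ^ (ν / 2) := by
    intro w hw
    rw [← Real.rpow_natCast, ← Real.rpow_mul hw.le]
    congr 1; push_cast; ring
  rw [h1 (Real.sqrt (v * y) / t / 2) (by positivity), h1 (v / (2 * t)) (by positivity),
    ← Real.mul_rpow (by positivity) (by positivity)]
  congr 1
  rw [div_pow, div_pow, Real.sq_sqrt (by positivity)]
  field_simp
  try ring

lemma sq_aux (t v y : ℝ) (hv : 0 < v) (hy : 0 < y) :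
    (Real.sqrt (v * y) / t / 2) ^ 2 = v / (4 * t ^ 2) * y := by
  rw [div_pow, div_pow, Real.sq_sqrt (by positivity)]
  ring

lemma besqQ_eq (ν t v y : ℝ) (ht : 0 < t) (hv : 0 < v) (hy : 0 < y) :
    besqQ ν t v y = (1 / (2 * t)) * (v / (2 * t)) ^ ν * Real.exp ((y - v) / (2 * t)) *
      bphi ν (-(v / (4 * t ^ 2)) * y) := by
  unfold besqQ
  rw [besselJ_eq _ _ (by positivity), sq_aux t v y hv hy, ← pow_aux ν t v y ht hv hy, neg_mul]
  ring

lemma besqP_eq (ν t y x : ℝ) (ht : 0 < t) (hx : 0 < x) (hy : 0 < y) :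
    besqP ν t y x = (1 / (2 * t)) * (y / (2 * t)) ^ ν * Real.exp (-(x + y) / (2 * t)) *
      bphi ν ((x / (4 * t ^ 2)) * y) := by
  unfold besqP
  rw [besselI_eq _ _ (by positivity), sq_aux t x y hx hy, ← pow_aux ν t y x ht hy hx, mul_comm y x]
  ring

lemma pascal_sum (m : ℕ) (f : ℕ → ℝ) :
    ∑ k ∈ Finset.range (m + 2), ((m + 1).choose k : ℝ) * f k =
      ∑ k ∈ Finset.range (m + 1), (m.choose k : ℝ) * f k +
      ∑ k ∈ Finset.range (m + 1), (m.choose k : ℝ) * f (k + 1) := by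
  rw [Finset.sum_range_succ']
  have h : ∑ k ∈ Finset.range (m + 1), (m.choose k : ℝ) * f k =
      ∑ k ∈ Finset.range (m + 1), (m.choose (k + 1) : ℝ) * f (k + 1) + f 0 := by
    have := Finset.sum_range_succ' (fun k => (m.choose k : ℝ) * f k) (m + 1)
    rw [Finset.sum_range_succ] at this
    simpa using this
  rw [h]
  simp only [Nat.choose_succ_succ, Nat.cast_add, add_mul, Finset.sum_add_distrib]
  simp
  ring

lemma vander (m : ℕ) : ∀ (n : ℕ) (ν : ℝ), -1 < ν →
    ∑ k ∈ Finset.range (m + 1), (m.choose k : ℝ) *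
      (if k ≤ n then 1 / (((n - k).factorial : ℝ) * Real.Gamma ((k : ℝ) + 1 + ν)) else 0) =
    Real.Gamma ((m : ℝ) + n + 1 + ν) /
      ((n.factorial : ℝ) * Real.Gamma ((m : ℝ) + 1 + ν) * Real.Gamma ((n : ℝ) + 1 + ν)) := by
  induction m with
  | zero =>
    intro n ν hν
    have h1 : Real.Gamma ((n : ℝ) + 1 + ν) ≠ 0 :=
      (Real.Gamma_pos_of_pos (by have : (0:ℝ) ≤ n := n.cast_nonneg
                                 linarith)).ne'
    simp
    field_simp
  | succ m ih =>
    intro n ν hν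
    rw [pascal_sum, ih n ν hν]
    have hm0 : (0:ℝ) ≤ m := m.cast_nonneg
    have hn0 : (0:ℝ) ≤ n := n.cast_nonneg
    have hg1 : Real.Gamma ((m : ℝ) + 1 + ν) ≠ 0 := (Real.Gamma_pos_of_pos (by linarith)).ne'
    have hg2 : Real.Gamma ((n : ℝ) + 1 + ν) ≠ 0 := (Real.Gamma_pos_of_pos (by linarith)).ne'
    have hs : Real.Gamma ((m : ℝ) + 1 + 1 + ν) = (m + 1 + ν) * Real.Gamma ((m : ℝ) + 1 + ν) := by
      rw [← Real.Gamma_add_one (by linarith)]; congr 1; ring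
    have hm1 : (m : ℝ) + 1 + ν ≠ 0 := by linarith
    cases n with
    | zero =>
      simp
      push_cast
      rw [hs]
      field_simp
    | succ n =>
      have e : ∀ k : ℕ, (if k + 1 ≤ n + 1 then
          1 / (((n + 1 - (k + 1)).factorial : ℝ) * Real.Gamma (((k + 1 : ℕ) : ℝ) + 1 + ν)) else 0) =
          (if k ≤ n then 1 / (((n - k).factorial : ℝ) * Real.Gamma ((k : ℝ) + 1 + (ν + 1))) else 0) := by
        intro k
        simp only [Nat.add_le_add_iff_right, Nat.add_sub_add_right]
        congr 4
        push_cast; ring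
      simp only [e]
      rw [ih n (ν + 1) (by linarith)]
      push_cast at *
      have e1 : (m : ℝ) + n + 1 + (ν + 1) = m + (n + 1) + 1 + ν := by ring
      have e2 : (m : ℝ) + 1 + (ν + 1) = m + 1 + 1 + ν := by ring
      have e3 : (n : ℝ) + 1 + (ν + 1) = n + 1 + 1 + ν := by ring
      have e4 : Real.Gamma ((m : ℝ) + 1 + (n + 1) + 1 + ν) =
          (m + (n + 1) + 1 + ν) * Real.Gamma ((m : ℝ) + (n + 1) + 1 + ν) := by
        rw [← Real.Gamma_add_one (by linarith)]; congr 1; ring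
      have hf : (n.factorial : ℝ) ≠ 0 := by positivity
      have hn1 : (n : ℝ) + 1 ≠ 0 := by positivity
      rw [e1, e2, e3, e4, hs, Nat.factorial_succ]
      push_cast
      field_simp
      ring

lemma bphi_summable (ν z : ℝ) (hν : -1 < ν) :
    Summable fun n : ℕ => z ^ n / (Real.Gamma ((n : ℝ) + 1) * Real.Gamma ((n : ℝ) + 1 + ν)) := by
  have hp : ∀ n : ℕ, 0 < Real.Gamma ((n : ℝ) + 1 + ν) := fun n =>
    Real.Gamma_pos_of_pos (by have : (0:ℝ) ≤ n := n.cast_nonneg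
                              linarith)
  have hb : ∀ n : ℕ, Real.Gamma (2 + ν) ≤ Real.Gamma (((n + 1 : ℕ) : ℝ) + 1 + ν) := by
    intro n
    induction n with
    | zero => apply le_of_eq; congr 1; push_cast; ring
    | succ n ih =>
      have h0 : (0:ℝ) ≤ n := n.cast_nonneg
      have : Real.Gamma (((n + 1 + 1 : ℕ) : ℝ) + 1 + ν) =
        ((n + 1 : ℕ) + 1 + ν) * Real.Gamma (((n + 1 : ℕ) : ℝ) + 1 + ν) := by
        rw [← Real.Gamma_add_one (by push_cast; linarith)]; congr 1; push_cast; ring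
      rw [this]
      have h2 := hp (n + 1)
      refine ih.trans (le_mul_of_one_le_left h2.le ?_)
      push_cast; linarith
  have h2 : 0 < Real.Gamma (2 + ν) := Real.Gamma_pos_of_pos (by linarith)
  rw [← summable_nat_add_iff 1]
  have hs := ((summable_nat_add_iff 1).2 (Real.summable_pow_div_factorial |z|)).mul_right
    (1 / Real.Gamma (2 + ν))
  refine Summable.of_norm_bounded hs ?_
  intro n
  rw [Real.Gamma_nat_eq_factorial, norm_div, norm_mul, norm_pow, Real.norm_eq_abs, Real.norm_eq_abs,
    Real.norm_eq_abs, abs_of_pos (hp (n+1)), Nat.abs_cast, div_mul_div_comm, mul_one]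
  gcongr
  exact hb n

/-- coefficient -/
noncomputable def bcoef (ν : ℝ) (p : ℕ × ℕ) : ℝ :=
  Real.Gamma ((p.1 : ℝ) + p.2 + 1 + ν) /
    ((Real.Gamma ((p.1 : ℝ) + 1) * Real.Gamma ((p.1 : ℝ) + 1 + ν)) *
     (Real.Gamma ((p.2 : ℝ) + 1) * Real.Gamma ((p.2 : ℝ) + 1 + ν)))

set_option maxHeartbeats 2000000 in
lemma double_sum (ν B C : ℝ) (hν : -1 < ν) :
    HasSum (fun p : ℕ × ℕ => B ^ p.1 * C ^ p.2 * bcoef ν p)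
      (bphi ν (B * C) * (Real.exp B * Real.exp C)) := by
  have hB : HasSum (fun n : ℕ => B ^ n / (n.factorial : ℝ)) (Real.exp B) := by
    rw [Real.exp_eq_exp_ℝ]; exact NormedSpace.expSeries_div_hasSum_exp B
  have hC : HasSum (fun n : ℕ => C ^ n / (n.factorial : ℝ)) (Real.exp C) := by
    rw [Real.exp_eq_exp_ℝ]; exact NormedSpace.expSeries_div_hasSum_exp C
  have hP := (bphi_summable ν (B * C) hν).hasSum
  have hBC := hB.mul hC (summable_mul_of_summable_norm hB.summable.norm hC.summable.norm)
  have hF := hP.mul hBC (summable_mul_of_summable_norm hP.summable.norm hBC.summable.norm)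
  let G : (ℕ × ℕ) × ℕ → ℝ := fun q => if q.2 ≤ q.1.1 ∧ q.2 ≤ q.1.2 then
    ((B * C) ^ q.2 / (Real.Gamma ((q.2 : ℝ) + 1) * Real.Gamma ((q.2 : ℝ) + 1 + ν))) *
     (B ^ (q.1.1 - q.2) / ((q.1.1 - q.2).factorial : ℝ) *
      (C ^ (q.1.2 - q.2) / ((q.1.2 - q.2).factorial : ℝ))) else 0
  let g : ℕ × ℕ × ℕ → (ℕ × ℕ) × ℕ := fun r => ((r.2.1 + r.1, r.2.2 + r.1), r.1)
  have hg : Function.Injective g := by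
    rintro ⟨a, b, c⟩ ⟨a', b', c'⟩ h
    simp only [g, Prod.mk.injEq] at h ⊢
    omega
  have hG : HasSum G (bphi ν (B * C) * (Real.exp B * Real.exp C)) := by
    rw [← hg.hasSum_iff]
    · have hGg : G ∘ g = fun x : ℕ × ℕ × ℕ =>
          (B * C) ^ x.1 / (Real.Gamma ((x.1 : ℝ) + 1) * Real.Gamma ((x.1 : ℝ) + 1 + ν)) *
          (B ^ x.2.1 / (x.2.1.factorial : ℝ) * (C ^ x.2.2 / (x.2.2.factorial : ℝ))) := by
        funext r
        simp [G, g]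
      rw [hGg]
      exact hF
    · rintro ⟨⟨m, n⟩, k⟩ hk
      simp only [G]
      rw [if_neg]
      rintro ⟨h1, h2⟩
      apply hk
      refine ⟨(k, m - k, n - k), ?_⟩
      change ((m - k + k, n - k + k), k) = ((m, n), k)
      rw [Nat.sub_add_cancel h1, Nat.sub_add_cancel h2]
  refine hG.prod_fiberwise ?_
  rintro ⟨m, n⟩
  have : B ^ m * C ^ n * bcoef ν (m, n) = ∑ k ∈ Finset.range (m + 1), G ((m, n), k) := by
    have hv := vander m n ν hν
    simp only [bcoef, Real.Gamma_nat_eq_factorial]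
    have hm : (m.factorial : ℝ) ≠ 0 := by positivity
    have : B ^ m * C ^ n * (Real.Gamma ((m : ℝ) + n + 1 + ν) /
      (m.factorial * Real.Gamma ((m : ℝ) + 1 + ν) * (n.factorial * Real.Gamma ((n : ℝ) + 1 + ν)))) =
      B ^ m * C ^ n / m.factorial * (Real.Gamma ((m : ℝ) + n + 1 + ν) /
      ((n.factorial : ℝ) * Real.Gamma ((m : ℝ) + 1 + ν) * Real.Gamma ((n : ℝ) + 1 + ν))) := by
      rw [div_mul_div_comm, ← mul_div_assoc]; congr 1; ring
    rw [this, ← hv, Finset.mul_sum]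
    refine Finset.sum_congr rfl fun k hk => ?_
    have hkm : k ≤ m := by simpa [Nat.lt_succ_iff] using hk
    simp only [G, hkm, true_and]
    split_ifs with hkn
    · rw [Nat.cast_choose ℝ hkm, Real.Gamma_nat_eq_factorial, mul_pow,
        ← pow_sub_mul_pow B hkm, ← pow_sub_mul_pow C hkn]
      have : (k.factorial : ℝ) ≠ 0 := by positivity
      have : ((m-k).factorial : ℝ) ≠ 0 := by positivity
      have : ((n-k).factorial : ℝ) ≠ 0 := by positivity
      have : Real.Gamma ((k : ℝ) + 1 + ν) ≠ 0 :=
        (Real.Gamma_pos_of_pos (by have : (0:ℝ) ≤ k := k.cast_nonneg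
                                   linarith)).ne'
      field_simp
    · simp
  rw [this]
  apply hasSum_sum_of_ne_finset_zero
  intro k hk
  simp only [Finset.mem_range] at hk
  simp only [G]
  rw [if_neg]
  omega

lemma weber (ν a β γ : ℝ) (hν : -1 < ν) (ha : 0 < a) :
    ∫ y in Set.Ioi (0 : ℝ), y ^ ν * Real.exp (-(a * y)) * (bphi ν (β * y) * bphi ν (γ * y)) =
      (1 / a) ^ (ν + 1) * (bphi ν (β / a * (γ / a)) * (Real.exp (β / a) * Real.exp (γ / a))) := by
  let d : ℕ → ℝ := fun n => Real.Gamma ((n : ℝ) + 1) * Real.Gamma ((n : ℝ) + 1 + ν)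
  have hd : ∀ n, 0 < d n := fun n => by
    have : (0:ℝ) ≤ n := n.cast_nonneg
    exact mul_pos (Real.Gamma_pos_of_pos (by linarith)) (Real.Gamma_pos_of_pos (by linarith))
  let F : ℝ → ℝ → ℕ × ℕ → ℝ → ℝ := fun β γ p y =>
    y ^ ν * Real.exp (-(a * y)) * ((β * y) ^ p.1 / d p.1 * ((γ * y) ^ p.2 / d p.2))
  have hF : ∀ β γ p, ∀ y ∈ Set.Ioi (0:ℝ), F β γ p y = (β ^ p.1 * γ ^ p.2 / (d p.1 * d p.2)) *
      (y ^ ((p.1 : ℝ) + p.2 + 1 + ν - 1) * Real.exp (-(a * y))) := by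
    intro β γ p y hy
    have hy : 0 < y := hy
    have : y ^ ((p.1 : ℝ) + p.2 + 1 + ν - 1) = y ^ ν * y ^ p.1 * y ^ p.2 := by
      rw [← Real.rpow_natCast, ← Real.rpow_natCast, ← Real.rpow_add hy, ← Real.rpow_add hy]
      congr 1; ring
    rw [this]
    simp only [F, mul_pow]
    field_simp
  have hpos : ∀ p : ℕ × ℕ, 0 < (p.1 : ℝ) + p.2 + 1 + ν := fun p => by
    have : (0:ℝ) ≤ p.1 := p.1.cast_nonneg
    have : (0:ℝ) ≤ p.2 := p.2.cast_nonneg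
    linarith
  have hint0 : ∀ p : ℕ × ℕ, ∫ y in Set.Ioi (0:ℝ),
      (y ^ ((p.1 : ℝ) + p.2 + 1 + ν - 1) * Real.exp (-(a * y))) =
      (1 / a) ^ ((p.1 : ℝ) + p.2 + 1 + ν) * Real.Gamma ((p.1 : ℝ) + p.2 + 1 + ν) := fun p =>
    Real.integral_rpow_mul_exp_neg_mul_Ioi (hpos p) ha
  have hI0 : ∀ p : ℕ × ℕ, IntegrableOn (fun y : ℝ =>
      (y ^ ((p.1 : ℝ) + p.2 + 1 + ν - 1) * Real.exp (-(a * y)))) (Set.Ioi 0) := fun p => by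
    by_contra h
    have h1 := hint0 p
    rw [integral_undef h] at h1
    have := Real.Gamma_pos_of_pos (hpos p)
    have : 0 < (1 / a) ^ ((p.1 : ℝ) + p.2 + 1 + ν) := by positivity
    have := mul_pos this ‹0 < Real.Gamma _›
    linarith
  have hI : ∀ β γ p, IntegrableOn (F β γ p) (Set.Ioi 0) := fun β γ p => by
    rw [integrableOn_congr_fun (hF β γ p) measurableSet_Ioi]
    exact (hI0 p).const_mul _
  have hint : ∀ β γ p, ∫ y in Set.Ioi (0:ℝ), F β γ p y =
      (1 / a) ^ (ν + 1) * ((β / a) ^ p.1 * (γ / a) ^ p.2 * bcoef ν p) := fun β γ p => by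
    rw [setIntegral_congr_fun measurableSet_Ioi (hF β γ p), integral_const_mul, hint0]
    have : (1 / a) ^ ((p.1 : ℝ) + p.2 + 1 + ν) = (1 / a) ^ (ν + 1) * (1 / a) ^ p.1 * (1 / a) ^ p.2 := by
      have h1 : 0 < 1 / a := by positivity
      rw [← Real.rpow_natCast, ← Real.rpow_natCast, ← Real.rpow_add h1, ← Real.rpow_add h1]
      congr 1; ring
    rw [this]
    simp only [bcoef, d, div_pow, one_pow]
    ring
  have hsum : ∀ β γ, HasSum (fun p => ∫ y in Set.Ioi (0:ℝ), F β γ p y)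
      ((1 / a) ^ (ν + 1) * (bphi ν (β / a * (γ / a)) * (Real.exp (β / a) * Real.exp (γ / a)))) := by
    intro β γ
    simp only [hint]
    exact (double_sum ν (β / a) (γ / a) hν).mul_left _
  have hnorm : ∀ p, ∫ y in Set.Ioi (0:ℝ), ‖F β γ p y‖ = ∫ y in Set.Ioi (0:ℝ), F |β| |γ| p y := by
    intro p
    refine setIntegral_congr_fun measurableSet_Ioi fun y hy => ?_
    have hy : 0 < y := hy
    simp only [F, norm_mul, norm_div, norm_pow, Real.norm_eq_abs, abs_of_pos (hd _), abs_of_pos hy,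
      abs_of_pos (Real.rpow_pos_of_pos hy ν), Real.abs_exp]
  have key := hasSum_integral_of_summable_integral_norm (hI β γ)
    (by simp only [hnorm]; exact (hsum |β| |γ|).summable)
  rw [← key.unique (hsum β γ)]
  congr 1; ext y
  simp only [F, tsum_mul_left]
  congr 1
  exact tsum_mul_tsum_of_summable_norm (bphi_summable ν (β * y) hν).norm (bphi_summable ν (γ * y) hν).norm

/-- Negative-time extension of the Chapman–Kolmogorov equation:
`∫₀^∞ q^{(ν)}_t(v,y) p^{(ν)}(t−s, y|x) dy = q^{(ν)}_s(v,x)`. -/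
theorem negative_time_chapman_kolmogorov
    (ν : ℝ) (hν : -1 < ν) (s t : ℝ) (hs : 0 < s) (hst : s < t)
    (x v : ℝ) (hx : 0 < x) (hv : 0 < v) :
    ∫ y in Set.Ioi (0 : ℝ), besqQ ν t v y * besqP ν (t - s) y x = besqQ ν s v x := by
  have ht : 0 < t := hs.trans hst
  have hτ : 0 < t - s := by linarith
  obtain ⟨τ, hτe⟩ : ∃ τ, τ = t - s := ⟨_, rfl⟩
  rw [← hτe] at hτ ⊢
  have hts : t = s + τ := by linarith
  have ha : 0 < s / (2 * t * τ) := by positivity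
  have hcongr : ∀ y ∈ Set.Ioi (0:ℝ), besqQ ν t v y * besqP ν τ y x =
      ((1 / (2 * t)) * (v / (2 * t)) ^ ν * (1 / (2 * τ)) * (1 / (2 * τ)) ^ ν *
        Real.exp (-v / (2 * t) - x / (2 * τ))) *
      (y ^ ν * Real.exp (-(s / (2 * t * τ) * y)) *
        (bphi ν (-(v / (4 * t ^ 2)) * y) * bphi ν (x / (4 * τ ^ 2) * y))) := by
    intro y hy
    have hy : 0 < y := hy
    rw [besqQ_eq ν t v y ht hv hy, besqP_eq ν τ y x hτ hx hy]
    have h1 : (y / (2 * τ)) ^ ν = y ^ ν * (1 / (2 * τ)) ^ ν := by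
      rw [← Real.mul_rpow hy.le (by positivity)]; congr 1; ring
    have h2 : Real.exp ((y - v) / (2 * t)) * Real.exp (-(x + y) / (2 * τ)) =
        Real.exp (-v / (2 * t) - x / (2 * τ)) * Real.exp (-(s / (2 * t * τ) * y)) := by
      rw [← Real.exp_add, ← Real.exp_add]; congr 1
      have : s = t - τ := by linarith
      rw [this]
      field_simp
      ring
    rw [h1]
    linear_combination ((1 / (2 * t)) * (v / (2 * t)) ^ ν * (1 / (2 * τ)) * (1 / (2 * τ)) ^ ν * y ^ ν *
      (bphi ν (-(v / (4 * t ^ 2)) * y) * bphi ν (x / (4 * τ ^ 2) * y))) * h2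
  rw [setIntegral_congr_fun measurableSet_Ioi hcongr, integral_const_mul, weber ν _ _ _ hν ha,
    besqQ_eq ν s v x hs hv hx]
  have e1 : -(v / (4 * t ^ 2)) / (s / (2 * t * τ)) * (x / (4 * τ ^ 2) / (s / (2 * t * τ))) =
      -(v / (4 * s ^ 2)) * x := by
    field_simp
    try ring
  have e2 : Real.exp (-v / (2 * t) - x / (2 * τ)) * (Real.exp (-(v / (4 * t ^ 2)) / (s / (2 * t * τ))) *
      Real.exp (x / (4 * τ ^ 2) / (s / (2 * t * τ)))) = Real.exp ((x - v) / (2 * s)) := by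
    rw [← Real.exp_add, ← Real.exp_add]; congr 1
    rw [hts]
    have : s + τ ≠ 0 := by positivity
    field_simp
    ring
  have e3 : (1 / (2 * t)) * (v / (2 * t)) ^ ν * (1 / (2 * τ)) * (1 / (2 * τ)) ^ ν *
      (1 / (s / (2 * t * τ))) ^ (ν + 1) = (1 / (2 * s)) * (v / (2 * s)) ^ ν := by
    have h : (v / (2 * s)) ^ ν = (v / (2 * t)) ^ ν * (1 / (2 * τ)) ^ ν * (1 / (s / (2 * t * τ))) ^ ν := by
      rw [← Real.mul_rpow (by positivity) (by positivity),
        ← Real.mul_rpow (by positivity) (by positivity)]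
      congr 1
      field_simp
    have h' : 1 / (2 * s) = 1 / (2 * t) * (1 / (2 * τ)) * (1 / (s / (2 * t * τ))) := by
      field_simp
    rw [Real.rpow_add_one (by positivity), h, h']
    ring
  rw [e1, ← e2, ← e3]
  ring
end

section
/- For every ν > −1, every 0 < s < t, and all x > 0, z > 0, the following 'negative-time' extension of the Chapman–Kolmogorov equation holds: ∫₀^∞ p^{(ν)}(t−s, z | y) · r^{(ν)}_t(y, x) dy = r^{(ν)}_s(z, x), where r^{(ν)}_t(y, x) = (1/(2t)) (y/x)^{ν/2} e^{(x+y)/(2t)} I_ν(√(xy)/t). -/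
open MeasureTheory Real

/-- The kernel `r^{(ν)}_t(y, x)`, real form of the analytically continued
density `p^{(ν)}(−t, y | x)`. -/
noncomputable def besqR (ν t y x : ℝ) : ℝ :=
  (1 / (2 * t)) * (y / x) ^ (ν / 2) * Real.exp ((x + y) / (2 * t)) *
    besselI ν (Real.sqrt (x * y) / t)


noncomputable def jA (ν : ℝ) (n : ℕ) : ℝ := 1 / ((n.factorial : ℝ) * Real.Gamma ((n : ℝ) + 1 + ν))

noncomputable def jJ (ν w : ℝ) : ℝ := ∑' n : ℕ, jA ν n * w ^ n

lemma gam_pos {ν : ℝ} (hν : -1 < ν) (n : ℕ) : 0 < Real.Gamma ((n : ℝ) + 1 + ν) := by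
  apply Real.Gamma_pos_of_pos
  have : (0:ℝ) ≤ n := n.cast_nonneg
  linarith

lemma jA_pos {ν : ℝ} (hν : -1 < ν) (n : ℕ) : 0 < jA ν n := by
  unfold jA
  have := gam_pos hν n
  positivity

lemma gam_ge {ν : ℝ} (hν : -1 < ν) (n : ℕ) :
    Real.Gamma (2 + ν) ≤ Real.Gamma (((n + 1 : ℕ) : ℝ) + 1 + ν) := by
  induction n with
  | zero => apply le_of_eq; congr 1; push_cast; ring
  | succ k ih =>
    have hk : (0:ℝ) ≤ k := k.cast_nonneg
    have h1 : Real.Gamma (((k + 1 + 1 : ℕ) : ℝ) + 1 + ν)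
        = (((k + 1 : ℕ) : ℝ) + 1 + ν) * Real.Gamma (((k + 1 : ℕ) : ℝ) + 1 + ν) := by
      rw [← Real.Gamma_add_one]
      · congr 1; push_cast; ring
      · push_cast; linarith
    rw [h1]
    have h2 := gam_pos hν (k + 1)
    have h3 : 1 ≤ (((k + 1 : ℕ) : ℝ) + 1 + ν) := by push_cast; linarith
    nlinarith

lemma jJ_summable {ν : ℝ} (hν : -1 < ν) (w : ℝ) (hw : 0 ≤ w) :
    Summable (fun n : ℕ => jA ν n * w ^ n) := by
  rw [← summable_nat_add_iff 1]
  have hG : 0 < Real.Gamma (2 + ν) := Real.Gamma_pos_of_pos (by linarith)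
  have hs := ((summable_nat_add_iff 1).2 (Real.summable_pow_div_factorial w)).mul_left
    (1 / Real.Gamma (2 + ν))
  refine Summable.of_nonneg_of_le (fun n => ?_) (fun n => ?_) hs
  · have := jA_pos hν (n + 1); positivity
  · have h := gam_ge hν n
    have hp := gam_pos hν (n + 1)
    have e : jA ν (n + 1) * w ^ (n + 1) =
        (1 / Real.Gamma (((n + 1 : ℕ) : ℝ) + 1 + ν)) * (w ^ (n + 1) / ((n + 1).factorial : ℝ)) := by
      unfold jA; field_simp
    rw [e]
    gcongr

lemma jJ_nonneg {ν : ℝ} (hν : -1 < ν) (w : ℝ) (hw : 0 ≤ w) : 0 ≤ jJ ν w :=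
  tsum_nonneg fun n => by have := jA_pos hν n; positivity

lemma jJ_ofReal {ν : ℝ} (hν : -1 < ν) (w : ℝ) (hw : 0 ≤ w) :
    ENNReal.ofReal (jJ ν w) = ∑' n : ℕ, ENNReal.ofReal (jA ν n * w ^ n) := by
  unfold jJ
  exact ENNReal.ofReal_tsum_of_nonneg (fun n => by have := jA_pos hν n; positivity)
    (jJ_summable hν w hw)

noncomputable def uU (k i : ℕ) : ℝ := if k ≤ i then 1 / ((i - k).factorial : ℝ) else 0

lemma uU_nonneg (k i : ℕ) : 0 ≤ uU k i := by unfold uU; split_ifs <;> positivity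

lemma uU_succ (k i : ℕ) : uU (k + 1) (i + 1) = uU k i := by simp [uU]

lemma uU_hasSum (k : ℕ) (α : ℝ) : HasSum (fun m => uU k m * α ^ m) (α ^ k * Real.exp α) := by
  have h : HasSum (fun i : ℕ => α ^ i / (i.factorial : ℝ)) (Real.exp α) := by
    rw [Real.exp_eq_exp_ℝ]
    exact NormedSpace.expSeries_div_hasSum_exp α
  have h2 := h.mul_left (α ^ k)
  rw [← Function.Injective.hasSum_iff (add_left_injective k)]
  · have e : ((fun m => uU k m * α ^ m) ∘ fun x => x + k)
        = fun i : ℕ => α ^ k * (α ^ i / (i.factorial : ℝ)) := by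
      funext i
      simp [uU, pow_add]
      ring
    rw [e]
    exact h2
  · intro m hm
    have : ¬ k ≤ m := fun hk => hm ⟨m - k, by simp; omega⟩
    simp [uU, this]

lemma vand (m : ℕ) : ∀ (n : ℕ) (ν : ℝ), -1 < ν →
    ∑ k ∈ Finset.range (m + 1), (m.choose k : ℝ) * (uU k n / Real.Gamma ((k : ℝ) + 1 + ν))
    = Real.Gamma ((m : ℝ) + n + 1 + ν) /
      ((n.factorial : ℝ) * Real.Gamma ((m : ℝ) + 1 + ν) * Real.Gamma ((n : ℝ) + 1 + ν)) := by
  induction m with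
  | zero =>
    intro n ν hν
    have h0 := gam_pos hν 0
    have h1 := gam_pos hν n
    simp [uU] at h0 ⊢
    field_simp
  | succ m ih =>
    intro n ν hν
    have hm := gam_pos hν m
    have hn := gam_pos hν n
    have hm0 : (0:ℝ) ≤ m := m.cast_nonneg
    have hn0 : (0:ℝ) ≤ n := n.cast_nonneg
    have split : ∀ f : ℕ → ℝ, ∑ k ∈ Finset.range (m + 1 + 1), ((m + 1).choose k : ℝ) * f k
        = ∑ k ∈ Finset.range (m + 1), (m.choose k : ℝ) * f k
          + ∑ k ∈ Finset.range (m + 1), (m.choose k : ℝ) * f (k + 1) := by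
      intro f
      rw [Finset.sum_range_succ']
      have : ∑ k ∈ Finset.range (m + 1), (m.choose k : ℝ) * f k
          = ∑ k ∈ Finset.range (m + 1), (m.choose (k + 1) : ℝ) * f (k + 1) + f 0 := by
        have h := Finset.sum_range_succ' (fun k => (m.choose k : ℝ) * f k) (m + 1)
        rw [Finset.sum_range_succ] at h
        simpa using h
      rw [this]
      simp only [Nat.choose_succ_succ, Nat.cast_add, add_mul, Finset.sum_add_distrib]
      simp
      ring
    rw [split (fun k => uU k n / Real.Gamma ((k : ℝ) + 1 + ν)), ih n ν hν]
    have e1 : Real.Gamma (((m + 1 : ℕ) : ℝ) + 1 + ν)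
        = ((m : ℝ) + 1 + ν) * Real.Gamma ((m : ℝ) + 1 + ν) := by
      rw [← Real.Gamma_add_one (by linarith)]; congr 1; push_cast; ring
    have hmp : 0 < (m : ℝ) + 1 + ν := by linarith
    have e2 : Real.Gamma (((m + 1 : ℕ) : ℝ) + n + 1 + ν)
        = ((m : ℝ) + n + 1 + ν) * Real.Gamma ((m : ℝ) + n + 1 + ν) := by
      rw [← Real.Gamma_add_one (by linarith)]; congr 1; push_cast; ring
    cases n with
    | zero =>
      have : ∀ k, uU (k + 1) 0 = 0 := fun k => by simp [uU]
      simp only [this]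
      rw [e1, e2]
      simp at hn ⊢
      field_simp
    | succ n =>
      have hh := ih n (ν + 1) (by linarith)
      have e3 : ∑ k ∈ Finset.range (m + 1), (m.choose k : ℝ) *
            (uU (k + 1) (n + 1) / Real.Gamma (((k + 1 : ℕ) : ℝ) + 1 + ν))
          = ∑ k ∈ Finset.range (m + 1), (m.choose k : ℝ) *
            (uU k n / Real.Gamma ((k : ℝ) + 1 + (ν + 1))) := by
        refine Finset.sum_congr rfl fun k _ => ?_
        rw [uU_succ]
        congr 3; push_cast; ring
      rw [e3, hh, e1, e2]
      have e4 : (m : ℝ) + n + 1 + (ν + 1) = (m : ℝ) + ((n + 1 : ℕ) : ℝ) + 1 + ν := by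
        push_cast; ring
      have e5 : (n : ℝ) + 1 + (ν + 1) = ((n + 1 : ℕ) : ℝ) + 1 + ν := by
        push_cast; ring
      have e6 : Real.Gamma ((m : ℝ) + 1 + (ν + 1))
          = ((m : ℝ) + 1 + ν) * Real.Gamma ((m : ℝ) + 1 + ν) := by
        rw [← Real.Gamma_add_one (by linarith)]; congr 1; ring
      rw [e4, e5, e6, Nat.factorial_succ]
      push_cast at hn ⊢
      field_simp
      ring

lemma vand' {ν : ℝ} (hν : -1 < ν) (m n : ℕ) :
    jA ν m * jA ν n * Real.Gamma ((m : ℝ) + n + 1 + ν)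
    = ∑ k ∈ Finset.range (m + 1), jA ν k * uU k m * uU k n := by
  have h := vand m n ν hν
  have hm := gam_pos hν m
  have hn := gam_pos hν n
  have : jA ν m * jA ν n * Real.Gamma ((m : ℝ) + n + 1 + ν) = (1 / (m.factorial : ℝ)) *
     (Real.Gamma ((m : ℝ) + n + 1 + ν) /
      ((n.factorial : ℝ) * Real.Gamma ((m : ℝ) + 1 + ν) * Real.Gamma ((n : ℝ) + 1 + ν))) := by
    unfold jA; field_simp
  rw [this, ← h, Finset.mul_sum]
  refine Finset.sum_congr rfl fun k hk => ?_
  have hkm : k ≤ m := by simp at hk; omega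
  have hk' := gam_pos hν k
  rw [Nat.cast_choose ℝ hkm]
  have e : uU k m = 1 / ((m - k).factorial : ℝ) := by simp [uU, hkm]
  rw [e]
  unfold jA
  field_simp

lemma dsum {ν : ℝ} (hν : -1 < ν) (α β : ℝ) (hα : 0 ≤ α) (hβ : 0 ≤ β) :
    ∑' m : ℕ, ∑' n : ℕ, ENNReal.ofReal
      (jA ν m * jA ν n * Real.Gamma ((m : ℝ) + n + 1 + ν) * α ^ m * β ^ n)
    = ENNReal.ofReal (Real.exp (α + β) * jJ ν (α * β)) := by
  have h1 : ∀ m n : ℕ, ENNReal.ofReal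
      (jA ν m * jA ν n * Real.Gamma ((m : ℝ) + n + 1 + ν) * α ^ m * β ^ n)
      = ∑' k : ℕ, ENNReal.ofReal (jA ν k) * ENNReal.ofReal (uU k m * α ^ m) *
          ENNReal.ofReal (uU k n * β ^ n) := by
    intro m n
    rw [vand' hν, Finset.sum_mul, Finset.sum_mul, ENNReal.ofReal_sum_of_nonneg,
      tsum_eq_sum (s := Finset.range (m + 1))]
    · refine Finset.sum_congr rfl fun k _ => ?_
      have h1 := jA_pos hν k
      have h2 := uU_nonneg k m
      rw [← ENNReal.ofReal_mul (by positivity), ← ENNReal.ofReal_mul (by positivity)]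
      congr 1; ring
    · intro k hk
      have : ¬ k ≤ m := by simp at hk; omega
      simp [uU, this]
    · intro k _
      have h1 := jA_pos hν k
      have h2 := uU_nonneg k m
      have h3 := uU_nonneg k n
      positivity
  have h2 : ∀ (k : ℕ) (γ : ℝ), 0 ≤ γ → ∑' m : ℕ, ENNReal.ofReal (uU k m * γ ^ m)
      = ENNReal.ofReal (γ ^ k * Real.exp γ) := by
    intro k γ hγ
    rw [← (uU_hasSum k γ).tsum_eq]
    refine (ENNReal.ofReal_tsum_of_nonneg (fun m => ?_) (uU_hasSum k γ).summable).symm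
    have := uU_nonneg k m
    positivity
  simp_rw [h1]
  have h3 : ∀ m : ℕ, ∑' n : ℕ, ∑' k : ℕ, ENNReal.ofReal (jA ν k) *
        ENNReal.ofReal (uU k m * α ^ m) * ENNReal.ofReal (uU k n * β ^ n)
      = ∑' k : ℕ, ENNReal.ofReal (jA ν k) *
        ENNReal.ofReal (uU k m * α ^ m) * ENNReal.ofReal (β ^ k * Real.exp β) := by
    intro m
    rw [ENNReal.tsum_comm]
    simp_rw [ENNReal.tsum_mul_left, h2 _ β hβ]
  simp_rw [h3]
  rw [ENNReal.tsum_comm]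
  simp_rw [ENNReal.tsum_mul_right, ENNReal.tsum_mul_left, h2 _ α hα]
  rw [ENNReal.ofReal_mul (Real.exp_pos _).le, jJ_ofReal hν _ (by positivity),
    ← ENNReal.tsum_mul_left]
  refine tsum_congr fun k => ?_
  have h1 := jA_pos hν k
  rw [← ENNReal.ofReal_mul (by positivity), ← ENNReal.ofReal_mul (by positivity),
    ← ENNReal.ofReal_mul (by positivity), Real.exp_add]
  congr 1; ring

lemma gint (p c : ℝ) (hp : 0 < p) (hc : 0 < c) :
    ∫⁻ y in Set.Ioi (0:ℝ), ENNReal.ofReal (y ^ (p - 1) * Real.exp (-(c * y)))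
      = ENNReal.ofReal ((1 / c) ^ p * Real.Gamma p) := by
  have h := Real.integral_rpow_mul_exp_neg_mul_Ioi hp hc
  have hpos : 0 < (1 / c) ^ p * Real.Gamma p := by
    have := Real.Gamma_pos_of_pos hp
    positivity
  have hi : Integrable (fun y : ℝ => y ^ (p - 1) * Real.exp (-(c * y)))
      (volume.restrict (Set.Ioi 0)) := by
    apply MeasureTheory.Integrable.of_integral_ne_zero
    rw [h]; exact hpos.ne'
  rw [← h, ofReal_integral_eq_lintegral_ofReal hi]
  refine (ae_restrict_iff' measurableSet_Ioi).2 (Filter.Eventually.of_forall fun y hy => ?_)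
  have : 0 < y := hy
  simp only [Pi.zero_apply]
  positivity

lemma core {ν : ℝ} (hν : -1 < ν) (A B c : ℝ) (hA : 0 < A) (hB : 0 < B) (hc : 0 < c) :
    ∫ y in Set.Ioi (0:ℝ), y ^ ν * Real.exp (-(c * y)) * jJ ν (A * y) * jJ ν (B * y)
    = (1 / c) ^ (ν + 1) * (Real.exp ((A + B) / c) * jJ ν (A * B / c ^ 2)) := by
  set G : ℝ → ENNReal := fun y => ∑' m : ℕ, ∑' n : ℕ, ENNReal.ofReal
    (jA ν m * A ^ m * (jA ν n * B ^ n)) *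
      ENNReal.ofReal (y ^ ((m : ℝ) + n + 1 + ν - 1) * Real.exp (-(c * y))) with hG
  have hGm : Measurable G := by
    refine Measurable.tsum fun m => Measurable.tsum fun n => ?_
    fun_prop
  have hnn : ∀ y ∈ Set.Ioi (0:ℝ),
      0 ≤ y ^ ν * Real.exp (-(c * y)) * jJ ν (A * y) * jJ ν (B * y) := by
    intro y hy
    have hy : 0 < y := hy
    have h1 := jJ_nonneg hν (A * y) (by positivity)
    have h2 := jJ_nonneg hν (B * y) (by positivity)
    positivity
  have hfG : ∀ y ∈ Set.Ioi (0:ℝ),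
      ENNReal.ofReal (y ^ ν * Real.exp (-(c * y)) * jJ ν (A * y) * jJ ν (B * y)) = G y := by
    intro y hy
    have hy : 0 < y := hy
    have h1 := jJ_nonneg hν (A * y) (by positivity)
    rw [ENNReal.ofReal_mul (by positivity), ENNReal.ofReal_mul (by positivity),
      jJ_ofReal hν _ (by positivity), jJ_ofReal hν _ (by positivity), hG]
    simp only
    rw [mul_right_comm, ← ENNReal.tsum_mul_left]
    refine tsum_congr fun m => ?_
    rw [mul_right_comm]
    rw [← ENNReal.tsum_mul_left]
    refine tsum_congr fun n => ?_
    have h1 := jA_pos hν m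
    have h2 := jA_pos hν n
    rw [← ENNReal.ofReal_mul (by positivity), ← ENNReal.ofReal_mul (by positivity),
      ← ENNReal.ofReal_mul (by positivity)]
    have e : y ^ ((m : ℝ) + n + 1 + ν - 1) = y ^ m * y ^ n * y ^ ν := by
      rw [show (m : ℝ) + n + 1 + ν - 1 = m + n + ν by ring, Real.rpow_add hy, Real.rpow_add hy,
        Real.rpow_natCast, Real.rpow_natCast]
    rw [e, mul_pow, mul_pow]
    congr 1; ring
  have e1 : ∫ y in Set.Ioi (0:ℝ), y ^ ν * Real.exp (-(c * y)) * jJ ν (A * y) * jJ ν (B * y)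
      = ∫ y in Set.Ioi (0:ℝ), (G y).toReal := by
    refine setIntegral_congr_fun measurableSet_Ioi fun y hy => ?_
    rw [← hfG y hy, ENNReal.toReal_ofReal (hnn y hy)]
  rw [e1, integral_toReal hGm.aemeasurable]
  swap
  · refine (ae_restrict_iff' measurableSet_Ioi).2 (Filter.Eventually.of_forall fun y hy => ?_)
    rw [← hfG y hy]; exact ENNReal.ofReal_lt_top
  have e2 : ∫⁻ y in Set.Ioi (0:ℝ), G y = ENNReal.ofReal
      ((1 / c) ^ (ν + 1) * (Real.exp ((A + B) / c) * jJ ν (A * B / c ^ 2))) := by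
    rw [hG]
    rw [lintegral_tsum (fun m => (Measurable.tsum fun n => by fun_prop).aemeasurable)]
    have e3 : ∀ m : ℕ, ∫⁻ y in Set.Ioi (0:ℝ), ∑' n : ℕ, ENNReal.ofReal
          (jA ν m * A ^ m * (jA ν n * B ^ n)) *
          ENNReal.ofReal (y ^ ((m : ℝ) + n + 1 + ν - 1) * Real.exp (-(c * y)))
        = ∑' n : ℕ, ENNReal.ofReal ((1 / c) ^ (ν + 1)) * ENNReal.ofReal
          (jA ν m * jA ν n * Real.Gamma ((m : ℝ) + n + 1 + ν) * (A / c) ^ m * (B / c) ^ n) := by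
      intro m
      rw [lintegral_tsum (fun n => by fun_prop)]
      refine tsum_congr fun n => ?_
      have hp : 0 < (m : ℝ) + n + 1 + ν := by
        have h1 : (0:ℝ) ≤ m := m.cast_nonneg
        have h2 : (0:ℝ) ≤ n := n.cast_nonneg
        linarith
      have h1 := jA_pos hν m
      have h2 := jA_pos hν n
      rw [lintegral_const_mul _ (by fun_prop), gint _ c hp hc,
        ← ENNReal.ofReal_mul (by positivity), ← ENNReal.ofReal_mul (by positivity)]
      have e : (1 / c) ^ ((m : ℝ) + n + 1 + ν) = (1 / c) ^ m * (1 / c) ^ n * (1 / c) ^ (ν + 1) := by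
        have : 0 < 1 / c := by positivity
        rw [show (m : ℝ) + n + 1 + ν = m + n + (ν + 1) by ring, Real.rpow_add this,
          Real.rpow_add this, Real.rpow_natCast, Real.rpow_natCast]
      rw [e, div_eq_mul_one_div A c, div_eq_mul_one_div B c, mul_pow, mul_pow]
      congr 1; ring
    simp_rw [e3, ENNReal.tsum_mul_left]
    rw [dsum hν _ _ (by positivity) (by positivity), ← ENNReal.ofReal_mul (by positivity)]
    congr 4
    · ring
    · ring
  rw [e2, ENNReal.toReal_ofReal]
  have := jJ_nonneg hν (A * B / c ^ 2) (by positivity)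
  positivity

lemma bes {ν : ℝ} (a b T : ℝ) (ha : 0 < a) (hb : 0 < b) (hT : 0 < T) :
    (b / a) ^ (ν / 2) * besselI ν (Real.sqrt (a * b) / T)
    = (b / (2 * T)) ^ ν * jJ ν (a * b / (4 * T ^ 2)) := by
  have hw : 0 < Real.sqrt (a * b) / T / 2 := by positivity
  have h1 : besselI ν (Real.sqrt (a * b) / T)
      = (Real.sqrt (a * b) / T / 2) ^ ν * jJ ν (a * b / (4 * T ^ 2)) := by
    unfold besselI jJ
    rw [← tsum_mul_left]
    refine tsum_congr fun n => ?_
    have e : (Real.sqrt (a * b) / T / 2) ^ (2 * (n : ℝ) + ν)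
        = (a * b / (4 * T ^ 2)) ^ n * (Real.sqrt (a * b) / T / 2) ^ ν := by
      rw [Real.rpow_add hw, Real.rpow_mul hw.le, Real.rpow_natCast]
      congr 2
      rw [Real.rpow_two, div_pow, div_pow, Real.sq_sqrt (by positivity)]
      field_simp; norm_num
    rw [e, jA, Real.Gamma_nat_eq_factorial]
    ring
  rw [h1, ← mul_assoc]
  congr 1
  have h2 : (b / a) ^ (ν / 2) = (Real.sqrt (b / a)) ^ ν := by
    rw [Real.sqrt_eq_rpow, ← Real.rpow_mul (by positivity)]
    congr 1; ring
  rw [h2, ← Real.mul_rpow (by positivity) (by positivity)]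
  congr 1
  have : Real.sqrt (b / a) * Real.sqrt (a * b) = b := by
    rw [← Real.sqrt_mul (by positivity), show b / a * (a * b) = b ^ 2 by field_simp,
      Real.sqrt_sq hb.le]
  calc _ = Real.sqrt (b / a) * Real.sqrt (a * b) / (2 * T) := by field_simp
    _ = _ := by rw [this]

theorem negative_time_chapman_kolmogorov'
    (ν : ℝ) (hν : -1 < ν) (s t : ℝ) (hs : 0 < s) (hst : s < t)
    (x z : ℝ) (hx : 0 < x) (hz : 0 < z) :
    ∫ y in Set.Ioi (0 : ℝ), besqP ν (t - s) z y * besqR ν t y x = besqR ν s z x := by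
  have ht : 0 < t := hs.trans hst
  obtain ⟨T, hTdef⟩ : ∃ T, T = t - s := ⟨_, rfl⟩
  have hT : 0 < T := by rw [hTdef]; linarith
  have hsT : t = s + T := by rw [hTdef]; ring
  rw [← hTdef]
  have hR : ∀ u y w : ℝ, 0 < u → 0 < y → 0 < w → besqR ν u y w =
      (1 / (2 * u)) * (y / (2 * u)) ^ ν * Real.exp ((w + y) / (2 * u)) *
        jJ ν (w * y / (4 * u ^ 2)) := by
    intro u y w hu hy hw
    have h := bes (ν := ν) w y u hw hy hu
    unfold besqR
    linear_combination (1 / (2 * u)) * Real.exp ((w + y) / (2 * u)) * h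
  have hP : ∀ u y w : ℝ, 0 < u → 0 < y → 0 < w → besqP ν u y w =
      (1 / (2 * u)) * (y / (2 * u)) ^ ν * Real.exp (-(w + y) / (2 * u)) *
        jJ ν (w * y / (4 * u ^ 2)) := by
    intro u y w hu hy hw
    have h := bes (ν := ν) w y u hw hy hu
    unfold besqP
    linear_combination (1 / (2 * u)) * Real.exp (-(w + y) / (2 * u)) * h
  set c := s / (2 * t * T) with hc
  have hcpos : 0 < c := by positivity
  have e : ∫ y in Set.Ioi (0 : ℝ), besqP ν T z y * besqR ν t y x
      = ∫ y in Set.Ioi (0 : ℝ), ((1 / (2 * T)) * (z / (2 * T)) ^ ν * (1 / (2 * t)) *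
        (1 / (2 * t)) ^ ν * Real.exp (-z / (2 * T) + x / (2 * t))) *
        (y ^ ν * Real.exp (-(c * y)) * jJ ν (z / (4 * T ^ 2) * y) *
          jJ ν (x / (4 * t ^ 2) * y)) := by
    refine setIntegral_congr_fun measurableSet_Ioi fun y hy => ?_
    have hy : 0 < y := hy
    rw [hP T z y hT hz hy, hR t y x ht hy hx]
    have e1 : Real.exp (-(y + z) / (2 * T)) * Real.exp ((x + y) / (2 * t))
        = Real.exp (-z / (2 * T) + x / (2 * t)) * Real.exp (-(c * y)) := by
      rw [← Real.exp_add, ← Real.exp_add]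
      congr 1
      rw [hc]
      field_simp
      rw [hsT]; ring
    have e2 : (y / (2 * t)) ^ ν = (1 / (2 * t)) ^ ν * y ^ ν := by
      rw [← Real.mul_rpow (by positivity) (by positivity)]; congr 1; ring
    have e3 : y * z / (4 * T ^ 2) = z / (4 * T ^ 2) * y := by ring
    have e4 : x * y / (4 * t ^ 2) = x / (4 * t ^ 2) * y := by ring
    rw [e2, e3, e4]
    linear_combination (1 / (2 * T)) * (z / (2 * T)) ^ ν * (1 / (2 * t)) *
        (1 / (2 * t)) ^ ν * y ^ ν * jJ ν (z / (4 * T ^ 2) * y) *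
          jJ ν (x / (4 * t ^ 2) * y) * e1
  rw [e, integral_const_mul, core hν _ _ c (by positivity) (by positivity) hcpos,
    hR s z x hs hz hx]
  have e1 : z / (4 * T ^ 2) * (x / (4 * t ^ 2)) / c ^ 2 = x * z / (4 * s ^ 2) := by
    rw [hc]; field_simp; norm_num
  have e2 : Real.exp (-z / (2 * T) + x / (2 * t)) *
      Real.exp ((z / (4 * T ^ 2) + x / (4 * t ^ 2)) / c) = Real.exp ((x + z) / (2 * s)) := by
    rw [← Real.exp_add]
    congr 1
    rw [hc]
    field_simp
    rw [hsT]; ring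
  have e3 : (z / (2 * T)) ^ ν * (1 / (2 * t)) ^ ν * (1 / c) ^ ν = (z / (2 * s)) ^ ν := by
    rw [← Real.mul_rpow (by positivity) (by positivity),
      ← Real.mul_rpow (by positivity) (by positivity)]
    congr 1
    rw [hc]; field_simp
  have e4 : (1 / (2 * T)) * (1 / (2 * t)) * (1 / c) = 1 / (2 * s) := by
    rw [hc]; field_simp
  rw [e1, Real.rpow_add_one (by positivity), ← e2, ← e3, ← e4]
  ring
end

section
/- For every ν > −1 and all t > 0, x > 0, z > 0: ∫₀^∞ I_ν(√(zv)) · (1/(2t)) · e^{(x−v)/(2t)} · J_ν(√(vx)/t) dv = e^{tz/2} · J_ν(√(zx)). -/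
open MeasureTheory Real

noncomputable def cB (ν : ℝ) (n : ℕ) : ℝ :=
  1 / (Real.Gamma ((n : ℝ) + 1) * Real.Gamma ((n : ℝ) + 1 + ν))

lemma cB_pos (ν : ℝ) (hν : -1 < ν) (n : ℕ) : 0 < cB ν n := by
  have h0 : (0 : ℝ) ≤ n := n.cast_nonneg
  have h1 := Real.Gamma_pos_of_pos (show (0 : ℝ) < (n : ℝ) + 1 by linarith)
  have h2 := Real.Gamma_pos_of_pos (show (0 : ℝ) < (n : ℝ) + 1 + ν by linarith)
  unfold cB
  positivity

lemma cB_succ (ν : ℝ) (hν : -1 < ν) (n : ℕ) :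
    cB ν n = cB ν (n + 1) * (((n : ℝ) + 1) * ((n : ℝ) + 1 + ν)) := by
  have h0 : (0 : ℝ) ≤ n := n.cast_nonneg
  have p1 : (0 : ℝ) < (n : ℝ) + 1 := by linarith
  have p2 : (0 : ℝ) < (n : ℝ) + 1 + ν := by linarith
  have h1 := Real.Gamma_pos_of_pos p1
  have h2 := Real.Gamma_pos_of_pos p2
  unfold cB
  push_cast
  rw [show (n : ℝ) + 1 + 1 + ν = ((n : ℝ) + 1 + ν) + 1 by ring,
    Real.Gamma_add_one p1.ne', Real.Gamma_add_one p2.ne']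
  field_simp

lemma cB_summable (ν : ℝ) (hν : -1 < ν) (w : ℝ) :
    Summable (fun n : ℕ => ‖cB ν n * w ^ n‖) := by
  apply Summable.norm
  apply summable_of_ratio_norm_eventually_le (r := 1 / 2) (by norm_num)
  filter_upwards [Filter.eventually_ge_atTop (max 1 ⌈2 * |w|⌉₊)] with n hn
  have hn1 : (1 : ℝ) ≤ n := by exact_mod_cast (le_max_left _ _).trans hn
  have hn2 : 2 * |w| ≤ n := (Nat.le_ceil _).trans (by exact_mod_cast (le_max_right _ _).trans hn)
  rw [norm_mul, norm_mul, cB_succ ν hν n, norm_mul, pow_succ, norm_mul, Real.norm_eq_abs w]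
  have h3 : 2 * |w| ≤ ‖((n : ℝ) + 1) * ((n : ℝ) + 1 + ν)‖ := by
    refine le_trans ?_ (le_abs_self _)
    nlinarith [abs_nonneg w]
  have h4 : 0 ≤ ‖cB ν (n + 1)‖ * ‖w ^ n‖ := by positivity
  nlinarith

lemma finite_id (m : ℕ) : ∀ (n : ℕ) (ν : ℝ), -1 < ν →
    ∑ k ∈ Finset.range (n + 1), (m.choose k : ℝ) *
      (1 / ((n - k).factorial * Real.Gamma ((k : ℝ) + 1 + ν))) =
    Real.Gamma ((m : ℝ) + n + ν + 1) /
      (n.factorial * Real.Gamma ((m : ℝ) + 1 + ν) * Real.Gamma ((n : ℝ) + 1 + ν)) := by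
  induction m with
  | zero =>
    intro n ν hν
    rw [Finset.sum_range_succ']
    have h0 : (0 : ℝ) ≤ n := n.cast_nonneg
    have h2 := Real.Gamma_pos_of_pos (show (0 : ℝ) < (n : ℝ) + 1 + ν by linarith)
    have h3 := Real.Gamma_pos_of_pos (show (0 : ℝ) < 1 + ν by linarith)
    simp
    rw [show (n : ℝ) + ν + 1 = (n : ℝ) + 1 + ν by ring]
    field_simp
  | succ m ih =>
    intro n ν hν
    have hm : (0 : ℝ) ≤ m := m.cast_nonneg
    have p2 : (0 : ℝ) < (m : ℝ) + 1 + ν := by linarith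
    have h2 := Real.Gamma_pos_of_pos p2
    rcases n with _ | n
    · have := Real.Gamma_pos_of_pos (show (0 : ℝ) < 1 + ν by linarith)
      have := Real.Gamma_pos_of_pos (show (0 : ℝ) < (m : ℝ) + 1 + 1 + ν by linarith)
      simp
      rw [show (m : ℝ) + 1 + ν + 1 = (m : ℝ) + 1 + 1 + ν by ring]
      field_simp
    · have hn : (0 : ℝ) ≤ n := n.cast_nonneg
      have e1 := ih (n + 1) ν hν
      have e2 := ih n (ν + 1) (by linarith)
      rw [Finset.sum_range_succ'] at e1 ⊢
      have split : ∑ k ∈ Finset.range (n + 1), ((m + 1).choose (k + 1) : ℝ) *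
          (1 / ((n + 1 - (k + 1)).factorial * Real.Gamma (((k + 1 : ℕ) : ℝ) + 1 + ν))) =
          ∑ k ∈ Finset.range (n + 1), (m.choose k : ℝ) *
            (1 / ((n - k).factorial * Real.Gamma ((k : ℝ) + 1 + (ν + 1)))) +
          ∑ k ∈ Finset.range (n + 1), (m.choose (k + 1) : ℝ) *
          (1 / ((n + 1 - (k + 1)).factorial * Real.Gamma (((k + 1 : ℕ) : ℝ) + 1 + ν))) := by
        rw [← Finset.sum_add_distrib]
        refine Finset.sum_congr rfl fun k _ => ?_
        rw [Nat.choose_succ_succ, Nat.add_sub_add_right]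
        push_cast
        rw [show (k : ℝ) + 1 + 1 + ν = (k : ℝ) + 1 + (ν + 1) by ring]
        ring
      simp only [Nat.choose_zero_right] at e1 ⊢
      rw [split, e2, add_assoc, e1]
      push_cast [Nat.factorial_succ]
      rw [show (m : ℝ) + 1 + (n + 1) + ν + 1 = ((m : ℝ) + n + ν + 2) + 1 by ring,
        show (m : ℝ) + n + (ν + 1) + 1 = (m : ℝ) + n + ν + 2 by ring,
        show (m : ℝ) + (n + 1) + ν + 1 = (m : ℝ) + n + ν + 2 by ring,
        show (m : ℝ) + 1 + (ν + 1) = ((m : ℝ) + 1 + ν) + 1 by ring,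
        show (m : ℝ) + 1 + 1 + ν = ((m : ℝ) + 1 + ν) + 1 by ring,
        show (n : ℝ) + 1 + (ν + 1) = (n : ℝ) + 1 + 1 + ν by ring,
        Real.Gamma_add_one p2.ne',
        Real.Gamma_add_one (show (m : ℝ) + n + ν + 2 ≠ 0 by linarith)]
      have h5 := Real.Gamma_pos_of_pos (show (0 : ℝ) < (n : ℝ) + 1 + 1 + ν by linarith)
      field_simp
      ring

lemma key (ν : ℝ) (hν : -1 < ν) (B D : ℝ) :
    HasSum (fun p : ℕ × ℕ => cB ν p.1 * cB ν p.2 * B ^ p.1 * D ^ p.2 *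
      Real.Gamma ((p.1 : ℝ) + p.2 + ν + 1))
      (Real.exp B * Real.exp D * ∑' k, cB ν k * (B * D) ^ k) := by
  have hexp : ∀ y : ℝ, HasSum (fun n : ℕ => y ^ n / n.factorial) (Real.exp y) := fun y => by
    rw [Real.exp_eq_exp_ℝ]; exact NormedSpace.expSeries_div_hasSum_exp y
  have hexpn : ∀ y : ℝ, Summable (fun n : ℕ => ‖y ^ n / n.factorial‖) :=
    fun y => (hexp y).summable.norm
  have s1 : Summable (fun p : ℕ × ℕ => (B ^ p.1 / p.1.factorial) * (D ^ p.2 / p.2.factorial)) :=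
    summable_mul_of_summable_norm (hexpn B) (hexpn D)
  have t1 := (hexp B).mul (hexp D) s1
  have s2 := summable_mul_of_summable_norm s1.norm (cB_summable ν hν (B * D))
  have t2 := t1.mul (cB_summable ν hν (B * D)).of_norm.hasSum s2
  let H : (ℕ × ℕ) × ℕ → ℝ := fun q => if q.2 ≤ q.1.1 ∧ q.2 ≤ q.1.2 then
    (B ^ (q.1.1 - q.2) / (q.1.1 - q.2).factorial) * (D ^ (q.1.2 - q.2) / (q.1.2 - q.2).factorial) *
      (cB ν q.2 * (B * D) ^ q.2) else 0
  let φ : (ℕ × ℕ) × ℕ → (ℕ × ℕ) × ℕ := fun q => ((q.1.1 + q.2, q.1.2 + q.2), q.2)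
  have hφ : Function.Injective φ := by
    rintro ⟨⟨a, b⟩, c⟩ ⟨⟨a', b'⟩, c'⟩ h
    simp only [φ, Prod.mk.injEq] at h ⊢
    omega
  have t3 : HasSum H (Real.exp B * Real.exp D * ∑' k, cB ν k * (B * D) ^ k) := by
    rw [← hφ.hasSum_iff]
    · have hH : H ∘ φ = fun x : (ℕ × ℕ) × ℕ => B ^ x.1.1 / (x.1.1.factorial : ℝ) *
          (D ^ x.1.2 / (x.1.2.factorial : ℝ)) * (cB ν x.2 * (B * D) ^ x.2) := by
        funext q
        simp [H, φ]
      rw [hH]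
      exact t2
    · rintro ⟨⟨a, b⟩, c⟩ h
      simp only [H]
      rw [if_neg]
      rintro ⟨h1, h2⟩
      exact h ⟨((a - c, b - c), c), by simp [φ]; omega⟩
  refine t3.prod_fiberwise fun p => ?_
  obtain ⟨m, n⟩ := p
  have e : cB ν m * cB ν n * B ^ m * D ^ n * Real.Gamma ((m : ℝ) + n + ν + 1) =
      ∑ k ∈ Finset.range (n + 1), H ((m, n), k) := by
    have f := finite_id m n ν hν
    have : cB ν m * cB ν n * B ^ m * D ^ n * Real.Gamma ((m : ℝ) + n + ν + 1) =
      B ^ m * D ^ n / m.factorial * (Real.Gamma ((m : ℝ) + n + ν + 1) /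
      (n.factorial * Real.Gamma ((m : ℝ) + 1 + ν) * Real.Gamma ((n : ℝ) + 1 + ν))) := by
      unfold cB
      rw [Real.Gamma_nat_eq_factorial, Real.Gamma_nat_eq_factorial]
      field_simp
    rw [this, ← f, Finset.mul_sum]
    refine Finset.sum_congr rfl fun k hk => ?_
    have hk : k ≤ n := by simpa [Nat.lt_succ_iff] using hk
    simp only [H]
    split_ifs with h
    · rw [Nat.cast_choose ℝ h.1]
      unfold cB
      rw [Real.Gamma_nat_eq_factorial, mul_pow]
      have g1 : (m.factorial : ℝ) ≠ 0 := by positivity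
      have hB : B ^ m = B ^ (m - k) * B ^ k := by rw [← pow_add, Nat.sub_add_cancel h.1]
      have hD : D ^ n = D ^ (n - k) * D ^ k := by rw [← pow_add, Nat.sub_add_cancel h.2]
      rw [hB, hD]
      have := Real.Gamma_pos_of_pos (show (0 : ℝ) < (k : ℝ) + 1 + ν by
        have : (0 : ℝ) ≤ k := k.cast_nonneg
        linarith)
      generalize Real.Gamma ((k : ℝ) + 1 + ν) = G at *
      generalize (m.factorial : ℝ) = M at *
      generalize B ^ (m - k) = b1
      generalize D ^ (n - k) = b2
      generalize B ^ k = b3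
      generalize D ^ k = b4
      have g2 : ((m - k).factorial : ℝ) ≠ 0 := by positivity
      have g3 : ((n - k).factorial : ℝ) ≠ 0 := by positivity
      have g4 : (k.factorial : ℝ) ≠ 0 := by positivity
      generalize ((m - k).factorial : ℝ) = M1 at *
      generalize ((n - k).factorial : ℝ) = M2 at *
      generalize (k.factorial : ℝ) = M3 at *
      clear t3 hφ t2 s2 t1 s1 hexpn hexp hB hD
      field_simp
    · rw [Nat.choose_eq_zero_of_lt (by omega)]
      simp
  simp only
  rw [e]
  apply hasSum_sum_of_ne_finset_zero
  intro k hk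
  simp only [H]
  rw [if_neg]
  simp at hk
  omega

lemma besselJ_eq_s2 (ν y : ℝ) (hy : 0 < y) :
    besselJ ν y = (y / 2) ^ ν * ∑' n, cB ν n * (-(y ^ 2 / 4)) ^ n := by
  unfold besselJ
  rw [← tsum_mul_left]
  congr 1; funext n
  rw [Real.rpow_add (by positivity), show 2 * (n : ℝ) = ((2 * n : ℕ) : ℝ) by push_cast; ring,
    Real.rpow_natCast, pow_mul, show (y / 2) ^ 2 = y ^ 2 / 4 by ring, neg_pow (y ^ 2 / 4)]
  unfold cB
  ring

lemma besselI_eq_s2 (ν y : ℝ) (hy : 0 < y) :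
    besselI ν y = (y / 2) ^ ν * ∑' n, cB ν n * (y ^ 2 / 4) ^ n := by
  unfold besselI
  rw [← tsum_mul_left]
  congr 1; funext n
  rw [Real.rpow_add (by positivity), show 2 * (n : ℝ) = ((2 * n : ℕ) : ℝ) by push_cast; ring,
    Real.rpow_natCast, pow_mul, show (y / 2) ^ 2 = y ^ 2 / 4 by ring]
  unfold cB
  ring

lemma base_int (ν : ℝ) (hν : -1 < ν) (t : ℝ) (ht : 0 < t) (m n : ℕ) :
    ∫ v in Set.Ioi (0 : ℝ), v ^ ((m : ℝ) + n + ν) * Real.exp (-(1 / (2 * t)) * v) =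
      (2 * t) ^ m * (2 * t) ^ n * (2 * t) ^ (ν + 1) * Real.Gamma ((m : ℝ) + n + ν + 1) := by
  have hm : (0 : ℝ) ≤ m := m.cast_nonneg
  have hn : (0 : ℝ) ≤ n := n.cast_nonneg
  have := Real.integral_rpow_mul_exp_neg_mul_Ioi
    (a := (m : ℝ) + n + ν + 1) (r := 1 / (2 * t)) (by linarith) (by positivity)
  simp only [add_sub_cancel_right, one_div_one_div] at this
  simp only [neg_mul]
  rw [this, show (m : ℝ) + n + ν + 1 = ((m + n : ℕ) : ℝ) + (ν + 1) by push_cast; ring,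
    Real.rpow_add (by positivity), Real.rpow_natCast, pow_add]

lemma base_integrable (ν : ℝ) (hν : -1 < ν) (t : ℝ) (ht : 0 < t) (m n : ℕ) :
    IntegrableOn (fun v : ℝ => v ^ ((m : ℝ) + n + ν) * Real.exp (-(1 / (2 * t)) * v))
      (Set.Ioi 0) := by
  have hm : (0 : ℝ) ≤ m := m.cast_nonneg
  have hn : (0 : ℝ) ≤ n := n.cast_nonneg
  have := integrableOn_rpow_mul_exp_neg_mul_rpow (p := 1) (s := (m : ℝ) + n + ν)
    (b := 1 / (2 * t)) (by linarith) one_pos (by positivity)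
  simpa using this

/-- Real form of the integral formula
`∫_{−∞}^0 J_ν(√(zy)) p_{J_ν}(−t, y|x) dy = e^{tz/2} J_ν(√(zx))`. -/
theorem besselI_besselJ_integral
    (ν : ℝ) (hν : -1 < ν) (t x z : ℝ) (ht : 0 < t) (hx : 0 < x) (hz : 0 < z) :
    ∫ v in Set.Ioi (0 : ℝ),
        besselI ν (Real.sqrt (z * v)) * (1 / (2 * t)) * Real.exp ((x - v) / (2 * t)) *
          besselJ ν (Real.sqrt (v * x) / t)
      = Real.exp (t * z / 2) * besselJ ν (Real.sqrt (z * x)) := by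
  let K : ℝ := (Real.sqrt (z * x) / (4 * t)) ^ ν * (1 / (2 * t)) * Real.exp (x / (2 * t))
  have hK : 0 < K := by
    have : 0 < Real.sqrt (z * x) := Real.sqrt_pos.2 (by positivity)
    positivity
  let C : ℕ × ℕ → ℝ := fun p => K * (cB ν p.1 * cB ν p.2 * (z / 4) ^ p.1 *
    (-(x / (4 * t ^ 2))) ^ p.2)
  let F : ℕ × ℕ → ℝ → ℝ := fun p v =>
    C p * (v ^ ((p.1 : ℝ) + p.2 + ν) * Real.exp (-(1 / (2 * t)) * v))
  have hint : ∀ p, Integrable (F p) (volume.restrict (Set.Ioi 0)) := fun p =>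
    (base_integrable ν hν t ht p.1 p.2).const_mul (C p)
  have hval : ∀ p : ℕ × ℕ, ∫ v in Set.Ioi (0 : ℝ), F p v = (K * (2 * t) ^ (ν + 1)) *
      (cB ν p.1 * cB ν p.2 * (t * z / 2) ^ p.1 * (-(x / (2 * t))) ^ p.2 *
      Real.Gamma ((p.1 : ℝ) + p.2 + ν + 1)) := by
    intro p
    simp only [F, C]
    rw [integral_const_mul, base_int ν hν t ht, show t * z / 2 = z / 4 * (2 * t) by ring,
      show -(x / (2 * t)) = -(x / (4 * t ^ 2)) * (2 * t) by field_simp; norm_num, mul_pow (z / 4) (2 * t),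
      mul_pow (-(x / (4 * t ^ 2))) (2 * t)]
    ring
  have hnorm : ∀ p : ℕ × ℕ, ∫ v in Set.Ioi (0 : ℝ), ‖F p v‖ = (K * (2 * t) ^ (ν + 1)) *
      (cB ν p.1 * cB ν p.2 * (t * z / 2) ^ p.1 * (x / (2 * t)) ^ p.2 *
      Real.Gamma ((p.1 : ℝ) + p.2 + ν + 1)) := by
    intro p
    have : ∫ v in Set.Ioi (0 : ℝ), ‖F p v‖ = ∫ v in Set.Ioi (0 : ℝ), ‖C p‖ *
        (v ^ ((p.1 : ℝ) + p.2 + ν) * Real.exp (-(1 / (2 * t)) * v)) := by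
      refine setIntegral_congr_fun measurableSet_Ioi fun v hv => ?_
      have hv : 0 < v := hv
      simp only [F]
      rw [norm_mul, Real.norm_of_nonneg (r := v ^ _ * _) (by positivity)]
    have hC : ‖C p‖ = K * (cB ν p.1 * cB ν p.2 * (z / 4) ^ p.1 * (x / (4 * t ^ 2)) ^ p.2) := by
      simp only [C]
      have h1 := cB_pos ν hν p.1
      have h2 := cB_pos ν hν p.2
      simp only [norm_mul, norm_pow, norm_neg]
      rw [Real.norm_of_nonneg hK.le, Real.norm_of_nonneg h1.le, Real.norm_of_nonneg h2.le,
        Real.norm_of_nonneg (show 0 ≤ z / 4 by positivity),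
        Real.norm_of_nonneg (show 0 ≤ x / (4 * t ^ 2) by positivity)]
    rw [this, hC]
    rw [integral_const_mul, base_int ν hν t ht, show t * z / 2 = z / 4 * (2 * t) by ring,
      show (x / (2 * t)) = (x / (4 * t ^ 2)) * (2 * t) by field_simp; norm_num, mul_pow (z / 4) (2 * t),
      mul_pow (x / (4 * t ^ 2)) (2 * t)]
    ring
  have hsum : Summable fun p => ∫ v in Set.Ioi (0 : ℝ), ‖F p v‖ := by
    simp only [hnorm]
    exact (key ν hν (t * z / 2) (x / (2 * t))).summable.mul_left _
  have main := hasSum_integral_of_summable_integral_norm hint hsum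
  simp only [hval] at main
  have main2 := (key ν hν (t * z / 2) (-(x / (2 * t)))).mul_left (K * (2 * t) ^ (ν + 1))
  have main3 := main.unique main2
  have hcongr : ∫ v in Set.Ioi (0 : ℝ),
        besselI ν (Real.sqrt (z * v)) * (1 / (2 * t)) * Real.exp ((x - v) / (2 * t)) *
          besselJ ν (Real.sqrt (v * x) / t) = ∫ v in Set.Ioi (0 : ℝ), ∑' p, F p v := by
    refine setIntegral_congr_fun measurableSet_Ioi fun v hv => ?_
    have hv : 0 < v := hv
    rw [besselI_eq_s2 _ _ (Real.sqrt_pos.2 (by positivity)),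
      besselJ_eq_s2 _ _ (div_pos (Real.sqrt_pos.2 (by positivity)) ht), div_pow,
      Real.sq_sqrt (by positivity), Real.sq_sqrt (by positivity)]
    have hp := tsum_mul_tsum_of_summable_norm (cB_summable ν hν (z * v / 4))
      (cB_summable ν hν (-(v * x / t ^ 2 / 4)))
    have hpre : (√(z * v) / 2) ^ ν * (√(v * x) / t / 2) ^ ν =
        (√(z * x) / (4 * t)) ^ ν * v ^ ν := by
      rw [← Real.mul_rpow (by positivity) (by positivity),
        ← Real.mul_rpow (by positivity) (by positivity)]
      congr 1
      rw [Real.sqrt_mul hz.le, Real.sqrt_mul hv.le, Real.sqrt_mul hz.le]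
      nth_rewrite 3 [← Real.mul_self_sqrt hv.le]
      field_simp
      norm_num
    have hexp : Real.exp ((x - v) / (2 * t)) =
        Real.exp (x / (2 * t)) * Real.exp (-(1 / (2 * t)) * v) := by
      rw [← Real.exp_add]; congr 1; ring
    calc _ = ((√(z * v) / 2) ^ ν * (√(v * x) / t / 2) ^ ν) * (1 / (2 * t)) *
          Real.exp ((x - v) / (2 * t)) * ((∑' n, cB ν n * (z * v / 4) ^ n) *
            ∑' n, cB ν n * (-(v * x / t ^ 2 / 4)) ^ n) := by ring
      _ = _ := by
        rw [hp, hpre, hexp, ← tsum_mul_left]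
        congr 1; funext p
        simp only [F, C, K]
        rw [show (p.1 : ℝ) + p.2 + ν = ((p.1 + p.2 : ℕ) : ℝ) + ν by push_cast; ring,
          Real.rpow_add hv, Real.rpow_natCast, pow_add,
          show z * v / 4 = z / 4 * v by ring,
          show -(v * x / t ^ 2 / 4) = -(x / (4 * t ^ 2)) * v by ring, mul_pow, mul_pow]
        ring
  rw [hcongr, main3, besselJ_eq_s2 _ _ (Real.sqrt_pos.2 (by positivity)),
    Real.sq_sqrt (by positivity),
    show t * z / 2 * -(x / (2 * t)) = -(z * x / 4) by field_simp; norm_num]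
  have e1 : Real.exp (x / (2 * t)) * Real.exp (-(x / (2 * t))) = 1 := by
    rw [← Real.exp_add]; simp
  have e2 : (√(z * x) / (4 * t)) ^ ν * (1 / (2 * t)) * (2 * t) ^ (ν + 1) =
      (√(z * x) / 2) ^ ν := by
    rw [Real.rpow_add (by positivity), Real.rpow_one,
      show √(z * x) / 2 = √(z * x) / (4 * t) * (2 * t) by field_simp; norm_num,
      Real.mul_rpow (x := √(z * x) / (4 * t)) (y := 2 * t) (by positivity) (by positivity)]
    field_simp
  rw [← e2]
  simp only [K]
  linear_combination ((√(z * x) / (4 * t)) ^ ν * (1 / (2 * t)) * (2 * t) ^ (ν + 1) *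
    Real.exp (t * z / 2) * ∑' n, cB ν n * (-(z * x / 4)) ^ n) * e1
end

section
/- Let ν > −1, N ≥ 0, and let a₁, …, a_N be distinct positive reals. Define, for y > 0, P(y) = ∫₀^∞ (1/2) (u/y)^{ν/2} J_ν(√(uy)) e^{(y−u)/2} ∏_{k=1}^N (−u − a_k) du. Then (a) P coincides on (0, ∞) with a monic polynomial of degree N, and (b) for each j ∈ {1, …, N}: ∫₀^∞ P(y) · (1/2) (y/a_j)^{ν/2} I_ν(√(a_j y)) e^{−(a_j+y)/2} dy = 0. -/
open MeasureTheory Real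

/-- Type-II multiple orthogonal polynomial `P` associated with the modified Bessel
weight, in the real form of its integral representation. -/
noncomputable def typeIIP (ν : ℝ) {N : ℕ} (a : Fin N → ℝ) (y : ℝ) : ℝ :=
  ∫ u in Set.Ioi (0 : ℝ),
    (1 / 2) * (u / y) ^ (ν / 2) * besselJ ν (Real.sqrt (u * y)) * Real.exp ((y - u) / 2) *
      ∏ k : Fin N, (-u - a k)


noncomputable def auxG (ν : ℝ) (m : ℕ) : ℝ := 2 ^ m * Real.Gamma (ν + m + 1)

noncomputable def auxH (ν : ℝ) (m : ℕ) (x : ℝ) : ℝ :=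
  ∑ k ∈ Finset.range (m + 1), (m.choose k : ℝ) * (auxG ν m / auxG ν k) * x ^ k

noncomputable def auxE (ν z : ℝ) : ℝ :=
  ∑' n : ℕ, z ^ n / ((n.factorial : ℝ) * Real.Gamma ((n : ℝ) + 1 + ν))

lemma aux_gamma_pos {ν : ℝ} (hν : -1 < ν) (m : ℕ) : 0 < Real.Gamma (ν + m + 1) := by
  apply Real.Gamma_pos_of_pos
  have : (0:ℝ) ≤ m := Nat.cast_nonneg m
  linarith

lemma aux_gamma_succ {ν : ℝ} (hν : -1 < ν) (m : ℕ) :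
    Real.Gamma (ν + (m + 1 : ℕ) + 1) = (ν + m + 1) * Real.Gamma (ν + m + 1) := by
  have : (0:ℝ) ≤ m := Nat.cast_nonneg m
  rw [← Real.Gamma_add_one (by linarith)]
  push_cast
  congr 1
  ring

lemma auxG_pos {ν : ℝ} (hν : -1 < ν) (m : ℕ) : 0 < auxG ν m :=
  mul_pos (by positivity) (aux_gamma_pos hν m)

lemma aux_coef {ν : ℝ} (hν : -1 < ν) (m k : ℕ) :
    ((m + 1).choose (k + 1) : ℝ) * (Real.Gamma (ν + (m + 1 : ℕ) + 1) /
        Real.Gamma (ν + (k + 1 : ℕ) + 1)) =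
      (m.choose k : ℝ) * (Real.Gamma (ν + m + 1) / Real.Gamma (ν + k + 1)) +
      (ν + m + (k + 1 : ℕ) + 1) * ((m.choose (k + 1) : ℝ) *
        (Real.Gamma (ν + m + 1) / Real.Gamma (ν + (k + 1 : ℕ) + 1))) := by
  rw [aux_gamma_succ hν, aux_gamma_succ hν]
  have h1 := aux_gamma_pos hν m
  have h2 := aux_gamma_pos hν k
  have hk : (0:ℝ) ≤ k := Nat.cast_nonneg k
  have h3 : ν + k + 1 ≠ 0 := by linarith
  have h4 : (m.choose (k + 1) : ℝ) * (k + 1) = m.choose k * (m - k) := by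
    rcases le_or_gt k m with h | h
    · have := Nat.choose_succ_right_eq m k
      have h' := congrArg (Nat.cast (R := ℝ)) this
      push_cast [Nat.cast_sub h] at h'
      exact h'
    · rw [Nat.choose_eq_zero_of_lt h, Nat.choose_eq_zero_of_lt (by omega)]; simp
  rw [Nat.choose_succ_succ]
  push_cast
  field_simp
  linear_combination -h4

lemma aux_vander {ν : ℝ} (hν : -1 < ν) (n m : ℕ) :
    Real.Gamma (ν + (n + m : ℕ) + 1) = Real.Gamma (ν + n + 1) *
      ∑ k ∈ Finset.range (m + 1), (m.choose k : ℝ) *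
        (Real.Gamma (ν + m + 1) / Real.Gamma (ν + k + 1)) * (n.descFactorial k : ℝ) := by
  induction m with
  | zero =>
    have := (aux_gamma_pos hν 0).ne'
    simp only [Nat.cast_zero, add_zero] at this
    simp [div_self this]
  | succ m ih =>
    rw [← add_assoc, aux_gamma_succ hν, ih]
    have hD : ∀ k, (n.descFactorial (k + 1) : ℝ) = n.descFactorial k * (n - k) := by
      intro k
      rw [Nat.descFactorial_succ]
      rcases le_or_gt k n with h | h
      · push_cast [Nat.cast_sub h]; ring
      · rw [Nat.descFactorial_eq_zero_iff_lt.2 h]; simp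
    have key : ∑ k ∈ Finset.range (m + 1 + 1), ((m + 1).choose k : ℝ) *
        (Real.Gamma (ν + (m + 1 : ℕ) + 1) / Real.Gamma (ν + k + 1)) * (n.descFactorial k : ℝ)
        = (ν + (n + m : ℕ) + 1) * ∑ k ∈ Finset.range (m + 1), (m.choose k : ℝ) *
        (Real.Gamma (ν + m + 1) / Real.Gamma (ν + k + 1)) * (n.descFactorial k : ℝ) := by
      rw [Finset.sum_range_succ']
      simp_rw [aux_coef hν]
      rw [Finset.sum_congr rfl (fun k _ => add_mul _ _ _), Finset.sum_add_distrib]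
      have e0 : ((m + 1).choose 0 : ℝ) * (Real.Gamma (ν + (m + 1 : ℕ) + 1) /
          Real.Gamma (ν + (0 : ℕ) + 1)) * (n.descFactorial 0 : ℝ) =
          (ν + m + (0 : ℕ) + 1) * ((m.choose 0 : ℝ) * (Real.Gamma (ν + m + 1) /
          Real.Gamma (ν + (0 : ℕ) + 1))) * (n.descFactorial 0 : ℝ) := by
        rw [aux_gamma_succ hν]; simp; ring
      rw [e0, add_assoc, ← Finset.sum_range_succ' (fun k : ℕ => (ν + m + (k : ℕ) + 1) *
        ((m.choose k : ℝ) * (Real.Gamma (ν + m + 1) /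
          Real.Gamma (ν + (k : ℕ) + 1))) * (n.descFactorial k : ℝ)) (m + 1),
        Finset.sum_range_succ _ (m + 1), Nat.choose_succ_self]
      simp only [Nat.cast_zero, zero_mul, mul_zero, add_zero]
      rw [← Finset.sum_add_distrib, Finset.mul_sum]
      refine Finset.sum_congr rfl fun k _ => ?_
      rw [hD]; push_cast; ring
    rw [key]; push_cast; ring

lemma aux_hasSum_desc (x : ℝ) (k : ℕ) :
    HasSum (fun n : ℕ => x ^ n / (n.factorial : ℝ) * (n.descFactorial k : ℝ))
      (x ^ k * Real.exp x) := by
  have h : HasSum (fun n : ℕ => x ^ (n + k) / ((n + k).factorial : ℝ) *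
      ((n + k).descFactorial k : ℝ)) (x ^ k * Real.exp x) := by
    have := (NormedSpace.expSeries_div_hasSum_exp x).mul_left (x ^ k)
    rw [← Real.exp_eq_exp_ℝ] at this
    refine this.congr_fun fun n => ?_
    have h := Nat.factorial_mul_descFactorial (n := n + k) (k := k) (by omega)
    rw [Nat.add_sub_cancel] at h
    have h1 : (n.factorial : ℝ) ≠ 0 := by positivity
    have h3 : ((n + k).descFactorial k : ℝ) ≠ 0 := by
      rw [Nat.cast_ne_zero, Ne, Nat.descFactorial_eq_zero_iff_lt]; omega
    rw [← h, pow_add]; push_cast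
    field_simp
  rw [hasSum_nat_add_iff k (f := fun n : ℕ => x ^ n / (n.factorial : ℝ) *
    (n.descFactorial k : ℝ))] at h
  rw [Finset.sum_eq_zero, add_zero] at h
  · exact h
  · intro i hi
    rw [Nat.descFactorial_eq_zero_iff_lt.2 (Finset.mem_range.1 hi)]; simp

lemma aux_hasSum {ν : ℝ} (hν : -1 < ν) (m : ℕ) (x : ℝ) :
    HasSum (fun n : ℕ => 2 ^ m * (x / 2) ^ n / (n.factorial : ℝ) *
      (Real.Gamma (ν + (n + m : ℕ) + 1) / Real.Gamma (ν + n + 1)))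
      (Real.exp (x / 2) * auxH ν m x) := by
  have h := hasSum_sum (s := Finset.range (m + 1)) (fun k _ =>
    (aux_hasSum_desc (x / 2) k).mul_left
      (2 ^ m * ((m.choose k : ℝ) * (Real.Gamma (ν + m + 1) / Real.Gamma (ν + k + 1)))))
  have e2 : ∑ k ∈ Finset.range (m + 1), 2 ^ m * ((m.choose k : ℝ) * (Real.Gamma (ν + m + 1) /
      Real.Gamma (ν + k + 1))) * ((x / 2) ^ k * Real.exp (x / 2)) =
      Real.exp (x / 2) * auxH ν m x := by
    rw [auxH, Finset.mul_sum]
    refine Finset.sum_congr rfl fun k _ => ?_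
    have := (aux_gamma_pos hν k).ne'
    rw [auxG, auxG, div_pow]
    field_simp
  rw [e2] at h
  refine h.congr_fun fun n => ?_
  · rw [aux_vander hν, mul_div_cancel_left₀ _ (aux_gamma_pos hν n).ne', Finset.mul_sum]
    exact Finset.sum_congr rfl fun k _ => by ring

lemma aux_integrable_tsum {α : Type*} [MeasurableSpace α] {μ : Measure α} {F : ℕ → α → ℝ}
    (hF : ∀ i, Integrable (F i) μ) (hs : Summable fun i => ∫ a, ‖F i a‖ ∂μ) :
    Integrable (fun a => ∑' i, F i a) μ := by
  refine ⟨(AEMeasurable.tsum fun i => (hF i).1.aemeasurable).aestronglyMeasurable, ?_⟩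
  have h1 : ∑' i, ∫⁻ a, ‖F i a‖ₑ ∂μ ≠ ⊤ := by
    have (i : ℕ) : ∫⁻ a, ‖F i a‖ₑ ∂μ = ‖∫ a, ‖F i a‖ ∂μ‖ₑ := by
      simp only [enorm]
      rw [lintegral_coe_eq_integral _ (hF i).norm, ENNReal.coe_nnreal_eq, coe_nnnorm,
        Real.norm_of_nonneg (integral_nonneg (fun a ↦ norm_nonneg (F i a)))]
      simp only [coe_nnnorm]
    rw [funext this]
    exact ENNReal.tsum_coe_ne_top_iff_summable.2 <| NNReal.summable_coe.1 hs.abs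
  rw [← lintegral_tsum fun i => (hF i).1.enorm] at h1
  exact lt_of_le_of_lt (lintegral_mono fun a => enorm_tsum_le_tsum_enorm) h1.lt_top

noncomputable def auxF (ν x : ℝ) (m n : ℕ) (u : ℝ) : ℝ :=
  (1 / 2) * (u / 2) ^ ν * ((u * x / 4) ^ n / ((n.factorial : ℝ) *
    Real.Gamma ((n : ℝ) + 1 + ν))) * Real.exp (-u / 2) * u ^ m

lemma auxF_eq {ν : ℝ} (x : ℝ) (m n : ℕ) {u : ℝ} (hu : 0 < u) :
    auxF ν x m n u = ((1 / 2) * (1 / 2 : ℝ) ^ ν * ((x / 4) ^ n / ((n.factorial : ℝ) *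
    Real.Gamma (ν + n + 1)))) * (u ^ ((ν + (n + m : ℕ) + 1) - 1) * Real.exp (-(1 / 2 * u))) := by
  rw [auxF, div_eq_mul_one_div u 2, Real.mul_rpow hu.le (by norm_num), mul_div_assoc u, mul_pow,
    add_sub_cancel_right, Real.rpow_add hu, Real.rpow_natCast, pow_add,
    show (n : ℝ) + 1 + ν = ν + n + 1 by ring, show -u / 2 = -(1 / 2 * u) by ring]
  ring

lemma auxF_integral {ν : ℝ} (hν : -1 < ν) (x : ℝ) (m n : ℕ) :
    IntegrableOn (auxF ν x m n) (Set.Ioi 0) ∧ ∫ u in Set.Ioi 0, auxF ν x m n u =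
      2 ^ m * (x / 2) ^ n / (n.factorial : ℝ) *
      (Real.Gamma (ν + (n + m : ℕ) + 1) / Real.Gamma (ν + n + 1)) := by
  have hpos : 0 < ν + (n + m : ℕ) + 1 := by
    have : (0:ℝ) ≤ (n + m : ℕ) := Nat.cast_nonneg _
    linarith
  have key := Real.integral_rpow_mul_exp_neg_mul_Ioi hpos (r := 1 / 2) (by norm_num)
  have hint : IntegrableOn (fun u : ℝ => u ^ ((ν + (n + m : ℕ) + 1) - 1) *
      Real.exp (-(1 / 2 * u))) (Set.Ioi 0) :=
    .of_integral_ne_zero (by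
      rw [key]; have := aux_gamma_pos hν (n + m); positivity)
  constructor
  · exact IntegrableOn.congr_fun (hint.const_mul _) (fun u hu => (auxF_eq x m n hu).symm) measurableSet_Ioi
  · rw [setIntegral_congr_fun measurableSet_Ioi (fun u hu => auxF_eq x m n hu),
      integral_const_mul, key]
    have h2 : (2 : ℝ) ^ ν ≠ 0 := by positivity
    have h3 := (aux_gamma_pos hν n).ne'
    rw [one_div_one_div, Real.rpow_add two_pos, Real.rpow_add two_pos,
      Real.rpow_natCast, Real.div_rpow zero_le_one two_pos.le, Real.one_rpow, Real.rpow_one,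
      pow_add, show x / 4 = x / 2 / 2 by ring, div_pow (x / 2) 2]
    field_simp

lemma auxF_norm {ν : ℝ} (hν : -1 < ν) (x : ℝ) (m n : ℕ) {u : ℝ} (hu : 0 < u) :
    ‖auxF ν x m n u‖ = auxF ν |x| m n u := by
  have h := aux_gamma_pos hν n
  rw [auxF_eq x m n hu, auxF_eq |x| m n hu, Real.norm_eq_abs]
  simp only [abs_mul, abs_div, abs_pow, Real.abs_exp, abs_of_pos h, Nat.abs_cast,
    abs_of_pos (Real.rpow_pos_of_pos hu _), abs_one, Nat.abs_ofNat,
    abs_of_pos (Real.rpow_pos_of_pos (show (0:ℝ) < 1 / 2 by norm_num) _)]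

lemma aux_moment {ν : ℝ} (hν : -1 < ν) (x : ℝ) (m : ℕ) :
    IntegrableOn (fun u => (1 / 2) * (u / 2) ^ ν * auxE ν (u * x / 4) * Real.exp (-u / 2) * u ^ m)
      (Set.Ioi 0) ∧
    ∫ u in Set.Ioi 0, (1 / 2) * (u / 2) ^ ν * auxE ν (u * x / 4) * Real.exp (-u / 2) * u ^ m =
      Real.exp (x / 2) * auxH ν m x := by
  have e : (fun u => (1 / 2) * (u / 2) ^ ν * auxE ν (u * x / 4) * Real.exp (-u / 2) * u ^ m) =
      fun u => ∑' n, auxF ν x m n u := by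
    ext u
    simp only [auxF, auxE, tsum_mul_left, tsum_mul_right]
  have hs : Summable fun n => ∫ u in Set.Ioi 0, ‖auxF ν x m n u‖ := by
    refine (aux_hasSum hν m |x|).summable.congr fun n => ?_
    rw [setIntegral_congr_fun measurableSet_Ioi (fun u hu => auxF_norm hν x m n hu),
      (auxF_integral hν |x| m n).2]
  rw [e]
  refine ⟨aux_integrable_tsum (fun n => (auxF_integral hν x m n).1) hs, ?_⟩
  have h := hasSum_integral_of_summable_integral_norm (fun n => (auxF_integral hν x m n).1) hs
  simp only [(auxF_integral hν x m _).2] at h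
  exact h.unique (aux_hasSum hν m x)

lemma aux_rpow (ν : ℝ) (n : ℕ) {u y : ℝ} (hu : 0 < u) (hy : 0 < y) :
    (u / y) ^ (ν / 2) * (Real.sqrt (u * y) / 2) ^ (2 * (n : ℝ) + ν) =
      (u / 2) ^ ν * (u * y / 4) ^ n := by
  have hs : 0 < Real.sqrt (u * y) / 2 := by positivity
  have e1 : (Real.sqrt (u * y) / 2) ^ 2 = u * y / 4 := by
    rw [div_pow, Real.sq_sqrt (by positivity)]; norm_num
  have e2 : (u / y) ^ (ν / 2) = (Real.sqrt (u / y)) ^ ν := by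
    rw [Real.sqrt_eq_rpow, ← Real.rpow_mul (by positivity)]; congr 1; ring
  have e3 : Real.sqrt (u / y) * (Real.sqrt (u * y) / 2) = u / 2 := by
    rw [← mul_div_assoc, ← Real.sqrt_mul (by positivity),
      show u / y * (u * y) = u ^ 2 by field_simp, Real.sqrt_sq hu.le]
  rw [Real.rpow_add hs, Real.rpow_mul hs.le, Real.rpow_two, e1, Real.rpow_natCast, e2, ← e3,
    Real.mul_rpow (by positivity) (by positivity)]
  ring

lemma aux_J (ν : ℝ) {u y : ℝ} (hu : 0 < u) (hy : 0 < y) :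
    (u / y) ^ (ν / 2) * besselJ ν (Real.sqrt (u * y)) = (u / 2) ^ ν * auxE ν (u * (-y) / 4) := by
  rw [besselJ, auxE, ← tsum_mul_left, ← tsum_mul_left]
  refine tsum_congr fun n => ?_
  have := aux_rpow ν n hu hy
  rw [Real.Gamma_nat_eq_factorial, show u * (-y) / 4 = (-1) * (u * y / 4) by ring, mul_pow]
  linear_combination ((-1 : ℝ) ^ n / ((n.factorial : ℝ) * Real.Gamma ((n : ℝ) + 1 + ν))) * this

lemma aux_I (ν : ℝ) {u y : ℝ} (hu : 0 < u) (hy : 0 < y) :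
    (u / y) ^ (ν / 2) * besselI ν (Real.sqrt (y * u)) = (u / 2) ^ ν * auxE ν (u * y / 4) := by
  rw [besselI, auxE, ← tsum_mul_left, ← tsum_mul_left, mul_comm y u]
  refine tsum_congr fun n => ?_
  have := aux_rpow ν n hu hy
  rw [Real.Gamma_nat_eq_factorial]
  linear_combination (1 / ((n.factorial : ℝ) * Real.Gamma ((n : ℝ) + 1 + ν))) * this

lemma aux_inv {ν : ℝ} (hν : -1 < ν) (m : ℕ) (x : ℝ) :
    ∑ k ∈ Finset.range (m + 1), (m.choose k : ℝ) * (auxG ν m / auxG ν k) * (-1) ^ k * auxH ν k x =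
      (-1) ^ m * x ^ m := by
  let L : Polynomial ℝ →ₗ[ℝ] ℝ := Polynomial.lsum (fun j => (x ^ j / auxG ν j) • LinearMap.id)
  have hL : ∀ j (c : ℝ), L (Polynomial.C c * Polynomial.X ^ j) = c * (x ^ j / auxG ν j) := by
    intro j c
    rw [Polynomial.C_mul_X_pow_eq_monomial]
    simp [L, Polynomial.lsum_apply, Polynomial.sum_monomial_index, mul_comm]
  have h1 : ∀ k, L ((Polynomial.X + 1) ^ k) = auxH ν k x / auxG ν k := by
    intro k
    rw [add_pow, map_sum, auxH, Finset.sum_div]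
    refine Finset.sum_congr rfl fun j _ => ?_
    have := hL j (k.choose j)
    rw [one_pow, mul_one, mul_comm]
    rw [Polynomial.C_eq_natCast] at this
    rw [this]
    have := (auxG_pos hν k).ne'
    have := (auxG_pos hν j).ne'
    field_simp
  have h2 : ∑ k ∈ Finset.range (m + 1),
      ((m.choose k : ℝ) * (-1) ^ k) • ((Polynomial.X + 1 : Polynomial ℝ) ^ k) =
      Polynomial.C ((-1) ^ m) * Polynomial.X ^ m := by
    have := add_pow (-(Polynomial.X + 1) : Polynomial ℝ) 1 m
    rw [show (-(Polynomial.X + 1) + 1 : Polynomial ℝ) = -Polynomial.X by ring, neg_pow] at this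
    rw [map_pow, map_neg, map_one, this]
    refine Finset.sum_congr rfl fun k _ => ?_
    rw [Polynomial.smul_eq_C_mul, neg_pow (Polynomial.X + 1 : Polynomial ℝ) k]
    simp
    ring
  have h3 := congrArg L h2
  rw [hL, map_sum] at h3
  simp only [map_smul, h1, smul_eq_mul] at h3
  have hm := (auxG_pos hν m).ne'
  calc _ = auxG ν m * ∑ k ∈ Finset.range (m + 1),
        (m.choose k : ℝ) * (-1) ^ k * (auxH ν k x / auxG ν k) := by
        rw [Finset.mul_sum]
        exact Finset.sum_congr rfl fun k _ => by ring
    _ = _ := by rw [h3]; field_simp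

lemma aux_typeIIP {ν : ℝ} (hν : -1 < ν) {N : ℕ} (a : Fin N → ℝ) (B : Polynomial ℝ)
    (hB : ∀ u, B.eval u = ∏ k : Fin N, (u - a k)) (hdeg : B.natDegree = N) {y : ℝ} (hy : 0 < y) :
    typeIIP ν a y = ∑ m ∈ Finset.range (N + 1), B.coeff m * (-1) ^ m * auxH ν m (-y) := by
  rw [typeIIP, setIntegral_congr_fun measurableSet_Ioi (g := fun u =>
    ∑ m ∈ Finset.range (N + 1), (B.coeff m * (-1) ^ m * Real.exp (y / 2)) *
      ((1 / 2) * (u / 2) ^ ν * auxE ν (u * (-y) / 4) * Real.exp (-u / 2) * u ^ m))]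
  · rw [integral_finset_sum _ (fun m _ => (aux_moment hν (-y) m).1.const_mul _)]
    refine Finset.sum_congr rfl fun m _ => ?_
    rw [integral_const_mul, (aux_moment hν (-y) m).2, neg_div, Real.exp_neg]
    have := Real.exp_ne_zero (y / 2)
    field_simp
  · intro u hu
    simp only
    rw [← hB, Polynomial.eval_eq_sum_range, hdeg, mul_assoc (1 / 2), aux_J ν hu hy,
      Finset.mul_sum, sub_div, sub_eq_add_neg, Real.exp_add, ← neg_div]
    refine Finset.sum_congr rfl fun m _ => ?_
    rw [neg_pow u]
    ring

/-- `P` is a monic polynomial of degree `N` on `(0,∞)` and satisfies the type-II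
orthogonality relations with respect to the modified Bessel weights. -/
theorem typeIIP_monic_and_orthogonal
    (ν : ℝ) (hν : -1 < ν) (N : ℕ) (a : Fin N → ℝ)
    (hapos : ∀ ℓ, 0 < a ℓ) (hdist : Function.Injective a) :
    (∃ P : Polynomial ℝ, P.Monic ∧ P.natDegree = N ∧
        ∀ y : ℝ, 0 < y → typeIIP ν a y = P.eval y) ∧
      ∀ j : Fin N,
        ∫ y in Set.Ioi (0 : ℝ),
            typeIIP ν a y *
              ((1 / 2) * (y / a j) ^ (ν / 2) * besselI ν (Real.sqrt (a j * y)) *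
                Real.exp (-(a j + y) / 2)) = 0 := by
  obtain ⟨B, hBdef⟩ : ∃ B : Polynomial ℝ,
      B = ∏ k : Fin N, (Polynomial.X - Polynomial.C (a k)) := ⟨_, rfl⟩
  have hB : ∀ u, B.eval u = ∏ k : Fin N, (u - a k) := by
    intro u; rw [hBdef, Polynomial.eval_prod]; simp
  have hmon : B.Monic := by rw [hBdef]; exact Polynomial.monic_prod_X_sub_C _ _
  have hdeg : B.natDegree = N := by
    rw [hBdef, Polynomial.natDegree_finset_prod_X_sub_C_eq_card]; simp
  have hT := fun {y : ℝ} (hy : 0 < y) => aux_typeIIP hν a B hB hdeg hy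
  constructor
  · let P : Polynomial ℝ := ∑ m ∈ Finset.range (N + 1), ∑ k ∈ Finset.range (m + 1),
      Polynomial.C (B.coeff m * (-1) ^ m * ((m.choose k : ℝ) * (auxG ν m / auxG ν k) * (-1) ^ k)) *
        Polynomial.X ^ k
    have hle : P.natDegree ≤ N := by
      refine Polynomial.natDegree_sum_le_of_forall_le _ _ fun m hm => ?_
      refine Polynomial.natDegree_sum_le_of_forall_le _ _ fun k hk => ?_
      have h1 := Finset.mem_range.1 hm
      have h2 := Finset.mem_range.1 hk
      exact (Polynomial.natDegree_C_mul_X_pow_le _ _).trans (by omega)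
    have hco : P.coeff N = 1 := by
      simp only [P, Polynomial.finset_sum_coeff, Polynomial.coeff_C_mul_X_pow]
      rw [Finset.sum_eq_single N, Finset.sum_eq_single N]
      · have : B.coeff N = 1 := by rw [← hdeg]; exact hmon
        rw [if_pos rfl, this, Nat.choose_self, div_self (auxG_pos hν N).ne']
        have : ((-1 : ℝ) ^ N) * (-1) ^ N = 1 := by rw [← mul_pow]; simp
        simpa using this
      · intro k _ hk; rw [if_neg (Ne.symm hk)]
      · intro h; exact absurd (Finset.self_mem_range_succ N) h
      · intro m hm hmN
        refine Finset.sum_eq_zero fun k hk => if_neg ?_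
        have h1 := Finset.mem_range.1 hm
        have h2 := Finset.mem_range.1 hk
        omega
      · intro h; exact absurd (Finset.self_mem_range_succ N) h
    refine ⟨P, Polynomial.monic_of_natDegree_le_of_coeff_eq_one N hle hco,
      Polynomial.natDegree_eq_of_le_of_coeff_ne_zero hle (by rw [hco]; exact one_ne_zero), ?_⟩
    intro y hy
    rw [hT hy]
    simp only [P, Polynomial.eval_finset_sum, Polynomial.eval_mul, Polynomial.eval_C,
      Polynomial.eval_pow, Polynomial.eval_X]
    refine Finset.sum_congr rfl fun m _ => ?_
    rw [auxH, Finset.mul_sum]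
    refine Finset.sum_congr rfl fun k _ => ?_
    rw [neg_pow y]; ring
  · intro j
    rw [setIntegral_congr_fun measurableSet_Ioi (g := fun y =>
      ∑ m ∈ Finset.range (N + 1), ∑ k ∈ Finset.range (m + 1),
      (B.coeff m * (-1) ^ m * ((m.choose k : ℝ) * (auxG ν m / auxG ν k) * (-1) ^ k) *
        Real.exp (-(a j / 2))) *
        ((1 / 2) * (y / 2) ^ ν * auxE ν (y * a j / 4) * Real.exp (-y / 2) * y ^ k))]
    · rw [integral_finset_sum _ (fun m _ => integrable_finset_sum _
        (fun k _ => (aux_moment hν (a j) k).1.const_mul _))]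
      have hz : B.eval (a j) = 0 := by
        rw [hB]; exact Finset.prod_eq_zero (Finset.mem_univ j) (sub_self _)
      refine Eq.trans ?_ hz
      rw [Polynomial.eval_eq_sum_range, hdeg]
      refine Finset.sum_congr rfl fun m _ => ?_
      rw [integral_finset_sum _ (fun k _ => (aux_moment hν (a j) k).1.const_mul _)]
      simp only [integral_const_mul, (aux_moment hν (a j) _).2]
      have hi := aux_inv hν m (a j)
      have he : Real.exp (-(a j / 2)) * Real.exp (a j / 2) = 1 := by
        rw [← Real.exp_add]; simp
      have hs : ((-1 : ℝ) ^ m) * (-1) ^ m = 1 := by rw [← mul_pow]; simp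
      calc _ = B.coeff m * (-1) ^ m * ∑ k ∈ Finset.range (m + 1),
            (m.choose k : ℝ) * (auxG ν m / auxG ν k) * (-1) ^ k * auxH ν k (a j) := by
            rw [Finset.mul_sum]
            refine Finset.sum_congr rfl fun k _ => ?_
            linear_combination (B.coeff m * (-1) ^ m * ((m.choose k : ℝ) *
              (auxG ν m / auxG ν k) * (-1) ^ k) * auxH ν k (a j)) * he
        _ = _ := by
            rw [hi]
            linear_combination (B.coeff m * a j ^ m) * hs
    · intro y hy
      simp only
      rw [hT hy, mul_assoc (1 / 2), aux_I ν hy (hapos j), Finset.sum_mul,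
        show -(a j + y) / 2 = -(a j / 2) + -y / 2 by ring, Real.exp_add]
      refine Finset.sum_congr rfl fun m _ => ?_
      rw [auxH, Finset.mul_sum, Finset.sum_mul]
      refine Finset.sum_congr rfl fun k _ => ?_
      rw [neg_pow y]; ring
end

section
/- Let x : ℕ → [0, ∞) be an injective sequence (a simple configuration on the nonnegative half-line) satisfying: (i) there exist α ∈ (1/2, 1) and C₁ > 0 with Σ_{i : x_i ≠ 0} x_i^{−α} ≤ C₁^{α}; (ii) there exist β > 0 and C₂ > 0 such that for every j, Σ_{i ≠ j} |x_i − x_j|^{−1} ≤ C₂ (max(x_j, 1))^{−β}. Then there exist θ ∈ (max(α, 1−β), 1) and C₃ > 0 such that for every j and every y < 0, the infinite product ∏_{i ≠ j} |1 − (y − x_j)/(x_i − x_j)| converges and satisfies ∏_{i ≠ j} |1 − (y − x_j)/(x_i − x_j)| ≤ exp[ C₃ ( (max(x_j, 1))^{θ} + (max(|y|, 1))^{θ} ) ]. -/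
open MeasureTheory Real

lemma log_bound_aux (α θ M X a v : ℝ) (hα : 0 < α) (hα1 : α ≤ 1) (hθ : α < θ) (hM : 1 ≤ M) (ha : 0 ≤ a)
    (haM : a ≤ M) (hX : 0 ≤ X) (hXa : X ≠ a) (hv : v = |X - a|⁻¹) :
    Real.log (1 + M * v) ≤ (2 * M) ^ θ * (1 / α + 1 / (θ - α)) *
      (X ^ (-α) + if X = 0 then 1 else 0) + v := by
  have hXa' : 0 < |X - a| := abs_pos.2 (sub_ne_zero.2 hXa)
  have hv0 : 0 < v := by rw [hv]; positivity
  have hε : 0 < θ - α := by linarith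
  have hb0 : 0 ≤ X ^ (-α) := Real.rpow_nonneg hX _
  have hsplit : (2 * M) ^ θ = (2 * M) ^ α * (2 * M) ^ (θ - α) := by
    rw [← Real.rpow_add (by linarith)]; congr 1; ring
  have h1 : 1 ≤ (2 * M) ^ (θ - α) := Real.one_le_rpow (by linarith) hε.le
  have h1' : 1 ≤ (2 * M) ^ α := Real.one_le_rpow (by linarith) hα.le
  by_cases hc : 2 * a < X
  · have hXpos : 0 < X := by linarith
    have hvX : v ≤ 2 / X := by
      rw [hv, abs_of_pos (by linarith), inv_eq_one_div, div_le_div_iff₀ (by linarith) hXpos]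
      linarith
    have h2 : Real.log (1 + M * v) ≤ (2 * M) ^ α * X ^ (-α) / α := by
      have e : (2 * M) ^ α * X ^ (-α) = (2 * M / X) ^ α := by
        rw [Real.div_rpow (by positivity) hX, Real.rpow_neg hX, div_eq_mul_inv]
      rw [e]
      have hmv : M * v ≤ 2 * M / X := by
        calc M * v ≤ M * (2 / X) := by gcongr
          _ = _ := by ring
      set t := 2 * M / X with ht
      have htpos : 0 < t := by positivity
      have h7 : Real.log (1 + M * v) ≤ Real.log (1 + t) :=
        Real.log_le_log (by positivity) (by linarith)
      have h8 : 1 + t ≤ (1 + t ^ α) ^ (1 / α) := by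
        have := Real.add_rpow_le_rpow_add (p := 1 / α) (a := 1) (b := t ^ α) zero_le_one
          (by positivity) (by rw [le_div_iff₀ hα]; linarith)
        rwa [Real.one_rpow, ← Real.rpow_mul htpos.le, mul_one_div_cancel hα.ne',
          Real.rpow_one] at this
      have h9 := Real.log_le_log (by positivity) h8
      rw [Real.log_rpow (by positivity)] at h9
      have h10 := Real.log_le_sub_one_of_pos (show 0 < 1 + t ^ α by positivity)
      have h11 : 1 / α * Real.log (1 + t ^ α) ≤ 1 / α * t ^ α := by
        gcongr
        linarith
      have : t ^ α / α = 1 / α * t ^ α := by ring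
      linarith
    rw [if_neg hXpos.ne']
    have h3 : (2 * M) ^ α * X ^ (-α) / α ≤ (2 * M) ^ θ * (1 / α + 1 / (θ - α)) * X ^ (-α) := by
      have : (2 * M) ^ α * X ^ (-α) / α = (2 * M) ^ α * (1 / α) * X ^ (-α) := by ring
      rw [this, hsplit]
      gcongr
      · nlinarith
      · have : 0 < 1 / (θ - α) := by positivity
        linarith
    linarith
  · push Not at hc
    have hlog : Real.log (1 + M * v) ≤ Real.log (1 + M) + v := by
      have : Real.log (1 + M * v) ≤ Real.log ((1 + M) * (1 + v)) :=
        Real.log_le_log (by positivity) (by nlinarith)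
      rw [Real.log_mul (by positivity) (by positivity)] at this
      have := Real.log_le_sub_one_of_pos (show 0 < 1 + v by positivity)
      linarith
    have hlogM : Real.log (1 + M) ≤ (2 * M) ^ (θ - α) / (θ - α) :=
      (Real.log_le_log (by positivity) (by linarith)).trans
        (Real.log_le_rpow_div (by positivity) hε)
    have hone : 1 ≤ (2 * M) ^ α * (X ^ (-α) + if X = 0 then 1 else 0) := by
      by_cases hX0 : X = 0
      · rw [if_pos hX0]; nlinarith
      · rw [if_neg hX0, add_zero, Real.rpow_neg hX, ← div_eq_mul_inv, ← Real.div_rpow (by positivity) hX]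
        have : 0 < X := lt_of_le_of_ne hX (Ne.symm hX0)
        apply Real.one_le_rpow _ hα.le
        rw [le_div_iff₀ this]; linarith
    set b := (X ^ (-α) + if X = 0 then 1 else 0) with hb
    have hα' : 0 < 1 / α := by positivity
    have hε' : 0 < 1 / (θ - α) := by positivity
    have h5 : (2 * M) ^ (θ - α) / (θ - α) ≤ (2 * M) ^ θ * (1 / α + 1 / (θ - α)) * b := by
      rw [hsplit]
      have e : (2 * M) ^ α * (2 * M) ^ (θ - α) * (1 / α + 1 / (θ - α)) * b
        = ((2 * M) ^ α * b) * ((2 * M) ^ (θ - α) * (1 / α + 1 / (θ - α))) := by ring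
      rw [e]
      have h6 : (2 * M) ^ (θ - α) / (θ - α) ≤ (2 * M) ^ (θ - α) * (1 / α + 1 / (θ - α)) := by
        rw [div_eq_mul_one_div]
        gcongr
        linarith
      refine h6.trans (le_mul_of_one_le_left (by positivity) hone)
    linarith

/-- Estimate for the Weierstrass canonical product of genus zero built on a
configuration on the nonnegative half-line satisfying conditions (C.A). -/
theorem weierstrass_product_bound
    (x : ℕ → ℝ) (hinj : Function.Injective x) (hnonneg : ∀ i, 0 ≤ x i)
    (α C₁ : ℝ) (hα₁ : 1 / 2 < α) (hα₂ : α < 1) (hC₁ : 0 < C₁)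
    (hsum₁ : Summable fun i : {i : ℕ // x i ≠ 0} => (x i.1) ^ (-α))
    (hbd₁ : (∑' i : {i : ℕ // x i ≠ 0}, (x i.1) ^ (-α)) ≤ C₁ ^ α)
    (β C₂ : ℝ) (hβ : 0 < β) (hC₂ : 0 < C₂)
    (hsum₂ : ∀ j : ℕ, Summable fun i : {i : ℕ // i ≠ j} => |x i.1 - x j|⁻¹)
    (hbd₂ : ∀ j : ℕ,
      (∑' i : {i : ℕ // i ≠ j}, |x i.1 - x j|⁻¹) ≤ C₂ * (max (x j) 1) ^ (-β)) :
    ∃ θ : ℝ, max α (1 - β) < θ ∧ θ < 1 ∧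
      ∃ C₃ : ℝ, 0 < C₃ ∧
        ∀ j : ℕ, ∀ y : ℝ, y < 0 →
          (Multipliable fun i : {i : ℕ // i ≠ j} => |1 - (y - x j) / (x i.1 - x j)|) ∧
          (∏' i : {i : ℕ // i ≠ j}, |1 - (y - x j) / (x i.1 - x j)|) ≤
            Real.exp (C₃ * ((max (x j) 1) ^ θ + (max |y| 1) ^ θ)) := by
  have hα0 : 0 < α := by linarith
  obtain ⟨θ, hθ1, hθ2⟩ := exists_between (show max α (1 - β) < 1 from max_lt hα₂ (by linarith))
  have hθα : α < θ := (le_max_left _ _).trans_lt hθ1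
  have hθ0 : 0 < θ := by linarith
  refine ⟨θ, hθ1, hθ2, ?_⟩
  set b : ℕ → ℝ := fun i => (x i) ^ (-α) + if x i = 0 then 1 else 0 with hbdef
  have hb0 : ∀ i, 0 ≤ b i := by
    intro i
    have := Real.rpow_nonneg (hnonneg i) (-α)
    simp only [hbdef]
    split_ifs <;> linarith
  have hbs : Summable b := by
    refine Summable.add ?_ ?_
    · have h : Summable (Set.indicator {i : ℕ | x i ≠ 0} fun i => (x i) ^ (-α)) :=
        summable_subtype_iff_indicator.1 hsum₁
      refine h.congr fun i => ?_
      by_cases hi : x i = 0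
      · simp [hi, Real.zero_rpow (neg_ne_zero.2 hα0.ne')]
      · simp [hi]
    · refine summable_of_hasFiniteSupport (Set.Subsingleton.finite ?_)
      intro i hi k hk
      apply hinj
      simp only [Function.mem_support, ne_eq, ite_eq_right_iff, one_ne_zero, imp_false,
        not_not] at hi hk
      rw [hi, hk]
  set S := ∑' i, b i with hS
  have hS0 : 0 ≤ S := tsum_nonneg hb0
  set c := 1 / α + 1 / (θ - α) with hc
  have hc0 : 0 < c := by
    have : 0 < θ - α := by linarith
    positivity
  refine ⟨4 * (c * S + C₂), by positivity, ?_⟩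
  intro j y hy
  set A := max (x j) 1 with hA
  set B := max |y| 1 with hB
  have hA1 : 1 ≤ A := le_max_right _ _
  have hB1 : 1 ≤ B := le_max_right _ _
  have hAx : x j ≤ A := le_max_left _ _
  have hBy : |y| ≤ B := le_max_left _ _
  have hmul : Multipliable fun i : {i : ℕ // i ≠ j} => |1 - (y - x j) / (x i.1 - x j)| := by
    have h : Multipliable fun i : {i : ℕ // i ≠ j} =>
        1 + (|1 - (y - x j) / (x i.1 - x j)| - 1) := by
      apply multipliable_one_add_of_summable
      refine Summable.of_nonneg_of_le (fun _ => norm_nonneg _) ?_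
        ((hsum₂ j).mul_left |y - x j|)
      intro i
      rw [Real.norm_eq_abs, ← abs_inv, ← abs_mul, ← div_eq_mul_inv]
      have := abs_abs_sub_abs_le_abs_sub (1 - (y - x j) / (x i.1 - x j)) 1
      rw [abs_one] at this
      refine this.trans (le_of_eq ?_)
      rw [← abs_neg]; congr 1; ring
    refine h.congr fun i => ?_
    ring
  refine ⟨hmul, ?_⟩
  refine le_of_tendsto hmul.hasProd (Filter.Eventually.of_forall fun s => ?_)
  set M := A + B with hM
  set K := (2 * M) ^ θ * c with hK
  have hK0 : 0 ≤ K := by positivity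
  have hfac : ∀ i : {i : ℕ // i ≠ j}, |1 - (y - x j) / (x i.1 - x j)| ≤
      Real.exp (K * b i.1 + |x i.1 - x j|⁻¹) := by
    intro i
    have hne : x i.1 ≠ x j := fun h => i.2 (hinj h)
    have h1 := log_bound_aux α θ M (x i.1) (x j) _ hα0 hα₂.le hθα (by linarith) (hnonneg j)
      (by linarith) (hnonneg _) hne rfl
    have hpos : 0 < 1 + M * |x i.1 - x j|⁻¹ := by positivity
    have h2 := (Real.log_le_iff_le_exp hpos).1 h1
    refine le_trans ?_ h2
    have h3 : |1 - (y - x j) / (x i.1 - x j)| ≤ |(1:ℝ)| + |(y - x j) / (x i.1 - x j)| := abs_sub _ _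
    rw [abs_one, abs_div, div_eq_mul_inv |y - x j|] at h3
    have h4 : |y - x j| ≤ M := by
      have : |y - x j| ≤ |y| + |x j| := abs_sub _ _
      rw [abs_of_nonneg (hnonneg j)] at this
      linarith
    have h5 : |y - x j| * |x i.1 - x j|⁻¹ ≤ M * |x i.1 - x j|⁻¹ := by gcongr
    linarith
  refine (Finset.prod_le_prod (fun _ _ => abs_nonneg _) fun i _ => hfac i).trans ?_
  rw [← Real.exp_sum]
  apply Real.exp_le_exp.2
  rw [Finset.sum_add_distrib, ← Finset.mul_sum]
  have hs1 : ∑ i ∈ s, b i.1 ≤ S := by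
    have h := Finset.sum_map s (Function.Embedding.subtype _) b
    refine le_trans (le_of_eq h.symm) ?_
    exact hbs.sum_le_tsum _ (fun i _ => hb0 i)
  have hs2 : ∑ i ∈ s, |x i.1 - x j|⁻¹ ≤ C₂ := by
    have h := (hsum₂ j).sum_le_tsum s (fun i _ => by positivity)
    have h' : A ^ (-β) ≤ 1 := Real.rpow_le_one_of_one_le_of_nonpos hA1 (by linarith)
    have := hbd₂ j
    nlinarith
  have hMθ : (2 * M) ^ θ ≤ 4 * (A ^ θ + B ^ θ) := by
    have h2 : (2:ℝ) ^ θ ≤ 4 := by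
      have := Real.rpow_le_rpow_of_exponent_le (show (1:ℝ) ≤ 2 by norm_num) hθ2.le
      rw [Real.rpow_one] at this
      linarith
    rw [Real.mul_rpow (by positivity) (by positivity)]
    have := Real.rpow_add_le_add_rpow (show 0 ≤ A by positivity) (show 0 ≤ B by positivity)
      hθ0.le hθ2.le
    gcongr
  have hAθ : 1 ≤ A ^ θ := Real.one_le_rpow hA1 hθ0.le
  have hBθ : 1 ≤ B ^ θ := Real.one_le_rpow hB1 hθ0.le
  have hKS : K * ∑ i ∈ s, b i.1 ≤ 4 * (A ^ θ + B ^ θ) * c * S := by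
    have h1 : K * ∑ i ∈ s, b i.1 ≤ K * S := mul_le_mul_of_nonneg_left hs1 hK0
    have h2 : K * S ≤ 4 * (A ^ θ + B ^ θ) * c * S := by
      rw [hK]; gcongr
    exact h1.trans h2
  nlinarith
end
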